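/- Let ψ : [0,∞) → [0,∞) be a non-decreasing function with ψ(0) = 0 and ψ(t)/√t → 0 as t → ∞. There exist a positive constant C, an integer ℓ depending only on n, and a time T ≥ T₀(ψ) such that for all t ≥ T, sup{ |x − m_h| : x ∈ 𝒞(u(·,t)) ∩ (CS(h) + ψ(t)Bⁿ) } ≤ C ( (1 + ψ(t)²)/t + ((1 + ψ(t))/t)·(‖f‖_{L¹}/‖h‖_{L¹}) + e^{-t/2} t^{3n/2} (‖f‖_{W^{ℓ,∞}} + ‖g‖_{W^{ℓ,∞}})/‖h‖_{L¹} ). -/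

import Mathlib

open Real Set Filter MeasureTheory Metric Pointwise
open scoped Nat Topology

noncomputable section

variable {n : ℕ}

/-- The Laplacian of `v : ℝⁿ → ℝ` at `x`, as the sum of second partial derivatives. -/
def lap (v : EuclideanSpace ℝ (Fin n) → ℝ) (x : EuclideanSpace ℝ (Fin n)) : ℝ :=
  ∑ i : Fin n, iteratedDeriv 2 (fun a : ℝ => v (x + a • EuclideanSpace.single i (1 : ℝ))) 0

/-- `CS(φ)`: the convex hull of the support of `φ`. -/
def CS (v : EuclideanSpace ℝ (Fin n) → ℝ) : Set (EuclideanSpace ℝ (Fin n)) :=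
  convexHull ℝ (tsupport v)

/-- `d_φ`: the diameter of the support of `φ`. -/
def dsupp (v : EuclideanSpace ℝ (Fin n) → ℝ) : ℝ := Metric.diam (tsupport v)

/-- `δ(K,L) = sup_{η ∈ L} dist(η, K)`. -/
def deltaCC (K L : Set (EuclideanSpace ℝ (Fin n))) : ℝ :=
  sSup ((fun η => Metric.infDist η K) '' L)

/-- The centroid `m_h = (∫ h(y) y dy)/(∫ h(y) dy)`. -/
def centroid (h : EuclideanSpace ℝ (Fin n) → ℝ) : EuclideanSpace ℝ (Fin n) :=
  (∫ y, h y)⁻¹ • ∫ y, h y • y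

/-- `T₀(φ) = min{T ≥ 0 : ∀ t ≥ T, t ≥ φ(t) + max{d_h, δ(CS(h),CS(f)) + d_f}}`, `h = f + g`. -/
def T0 (f g : EuclideanSpace ℝ (Fin n) → ℝ) (phi : ℝ → ℝ) : ℝ :=
  sInf {T : ℝ | 0 ≤ T ∧ ∀ t ≥ T,
    phi t + max (dsupp (f + g)) (deltaCC (CS (f + g)) (CS f) + dsupp f) ≤ t}

/-- Sobolev `W^{ℓ,∞}`-type norm: sum of sup-norms of the iterated derivatives up to order `ℓ`. -/
def sobNorm (ℓ : ℕ) (v : EuclideanSpace ℝ (Fin n) → ℝ) : ℝ :=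
  ∑ i ∈ Finset.range (ℓ + 1), ⨆ x, ‖iteratedFDeriv ℝ i v x‖

/-- The `L¹` norm. -/
def L1norm (v : EuclideanSpace ℝ (Fin n) → ℝ) : ℝ := ∫ y, |v y|

/-- The sup norm. -/
def LinfNorm (v : EuclideanSpace ℝ (Fin n) → ℝ) : ℝ := ⨆ x, |v x|

/-- `𝒞(v)`: the critical points of `v` lying in the interior of its support. -/
def critSet (v : EuclideanSpace ℝ (Fin n) → ℝ) : Set (EuclideanSpace ℝ (Fin n)) :=
  {x | x ∈ interior (tsupport v) ∧ gradient v x = 0}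

/-- Differentiation under the integral sign for an integrand supported in a fixed compact set. -/
theorem hasDerivAt_integral_of_compact {F : Type*} [NormedAddCommGroup F] [NormedSpace ℝ F]
    {G G' : EuclideanSpace ℝ (Fin n) → ℝ → F} {K : Set (EuclideanSpace ℝ (Fin n))} (hK : IsCompact K) {a b t : ℝ}
    (ht : t ∈ Ioo a b)
    (hG : ContinuousOn (Function.uncurry G) (univ ×ˢ Ioo a b))
    (hG' : ContinuousOn (Function.uncurry G') (univ ×ˢ Ioo a b))
    (hd : ∀ x, ∀ s ∈ Ioo a b, HasDerivAt (G x) (G' x s) s)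
    (hsupp : ∀ x ∉ K, ∀ s ∈ Ioo a b, G x s = 0) :
    HasDerivAt (fun s => ∫ x, G x s) (∫ x, G' x t) t := by
  have hsupp' : ∀ x ∉ K, ∀ s ∈ Ioo a b, G' x s = 0 := by
    intro x hx s hs
    have h0 : HasDerivAt (G x) 0 s :=
      (hasDerivAt_const s (0 : F)).congr_of_eventuallyEq
        (Filter.eventually_of_mem (Ioo_mem_nhds hs.1 hs.2) fun r hr => hsupp x hx r hr)
    exact (hd x s hs).unique h0
  have slice : ∀ (Φ : EuclideanSpace ℝ (Fin n) → ℝ → F), ContinuousOn (Function.uncurry Φ) (univ ×ˢ Ioo a b) →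
      ∀ s ∈ Ioo a b, Continuous (fun x => Φ x s) := by
    intro Φ hΦ s hs
    exact hΦ.comp_continuous (f := fun x : EuclideanSpace ℝ (Fin n) => (x, s)) (by fun_prop)
      (fun x => ⟨mem_univ _, hs⟩)
  obtain ⟨c, hac, hct⟩ := exists_between ht.1
  obtain ⟨d, htd, hdb⟩ := exists_between ht.2
  have hsub : Icc c d ⊆ Ioo a b := fun s hs => ⟨hac.trans_le hs.1, hs.2.trans_lt hdb⟩
  obtain ⟨C, hC⟩ := (hK.prod (isCompact_Icc (a := c) (b := d))).exists_bound_of_continuousOn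
    (hG'.mono (prod_mono (subset_univ _) hsub))
  have hint : ∀ (Φ : EuclideanSpace ℝ (Fin n) → ℝ → F), ContinuousOn (Function.uncurry Φ) (univ ×ˢ Ioo a b) →
      (∀ x ∉ K, ∀ s ∈ Ioo a b, Φ x s = 0) → ∀ s ∈ Ioo a b, Integrable (fun x => Φ x s) := by
    intro Φ hΦ h0 s hs
    exact (slice Φ hΦ s hs).integrable_of_hasCompactSupport
      (HasCompactSupport.intro hK fun x hx => h0 x hx s hs)
  refine (hasDerivAt_integral_of_dominated_loc_of_deriv_le
    (bound := K.indicator (fun _ => C)) (s := Icc c d) (F := fun s x => G x s)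
    (F' := fun s x => G' x s) (Icc_mem_nhds hct htd) ?_ (hint G hG hsupp t ht)
    (hint G' hG' hsupp' t ht).aestronglyMeasurable ?_ ?_ ?_).2
  · filter_upwards [Icc_mem_nhds hct htd] with s hs
    exact (hint G hG hsupp s (hsub hs)).aestronglyMeasurable
  · refine ae_of_all _ fun x s hs => ?_
    by_cases hx : x ∈ K
    · rw [indicator_of_mem hx]; exact hC (x, s) ⟨hx, hs⟩
    · rw [indicator_of_notMem hx, hsupp' x hx s (hsub hs), norm_zero]
  · exact (integrable_indicator_iff hK.measurableSet).2
      (integrableOn_const hK.measure_lt_top.ne)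
  · exact ae_of_all _ fun x s hs => hd x s (hsub hs)

/-- The integral of a directional derivative of a compactly supported function vanishes. -/
theorem integral_lineDeriv_eq_zero {w w' : EuclideanSpace ℝ (Fin n) → ℝ} {v : EuclideanSpace ℝ (Fin n)} {K : Set (EuclideanSpace ℝ (Fin n))} (hK : IsCompact K)
    (hw : Continuous w) (hw' : Continuous w') (hd : ∀ x, HasLineDerivAt ℝ w (w' x) x v)
    (h0 : ∀ x ∉ K, w x = 0) (h0' : ∀ x ∉ K, w' x = 0) : ∫ x, w' x = 0 := by
  have hi := hw.integrable_of_hasCompactSupport (μ := volume) (HasCompactSupport.intro hK h0)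
  have hi' := hw'.integrable_of_hasCompactSupport (μ := volume) (HasCompactSupport.intro hK h0')
  have := integral_bilinear_hasLineDerivAt_right_eq_neg_left_of_integrable (μ := volume)
    (f := fun _ : EuclideanSpace ℝ (Fin n) => (1 : ℝ)) (f' := fun _ => 0) (g := w) (g' := w') (v := v)
    (B := ContinuousLinearMap.mul ℝ ℝ) (by simp) (by simpa using hi')
    (by simpa using hi) (fun x _ => by
      have := (hasFDerivAt_const (𝕜 := ℝ) (1 : ℝ) x).hasLineDerivAt v
      simpa using this) (fun x _ => hd x)
  simpa using this

/-- A classical solution `U` of the damped wave equation, with its first and second derivatives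
`D` and `H`. -/
structure IsDampedWave (U : EuclideanSpace ℝ (Fin n) × ℝ → ℝ) (D : EuclideanSpace ℝ (Fin n) × ℝ → (EuclideanSpace ℝ (Fin n) × ℝ →L[ℝ] ℝ))
    (H : EuclideanSpace ℝ (Fin n) × ℝ → (EuclideanSpace ℝ (Fin n) × ℝ →L[ℝ] EuclideanSpace ℝ (Fin n) × ℝ →L[ℝ] ℝ)) (f g : EuclideanSpace ℝ (Fin n) → ℝ) : Prop where
  contU : ContinuousOn U (univ ×ˢ Ici 0)
  contD : ContinuousOn D (univ ×ˢ Ici 0)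
  contH : ContinuousOn H (univ ×ˢ Ioi 0)
  derivU : ∀ p : EuclideanSpace ℝ (Fin n) × ℝ, 0 < p.2 → HasFDerivAt U (D p) p
  derivD : ∀ p : EuclideanSpace ℝ (Fin n) × ℝ, 0 < p.2 → HasFDerivAt D (H p) p
  symm : ∀ p : EuclideanSpace ℝ (Fin n) × ℝ, 0 < p.2 → ∀ v w, H p v w = H p w v
  pde : ∀ p : EuclideanSpace ℝ (Fin n) × ℝ, 0 < p.2 → H p (0, 1) (0, 1)
    - ∑ i, H p (EuclideanSpace.single i 1, 0) (EuclideanSpace.single i 1, 0) + D p (0, 1) = 0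
  init : ∀ x, U (x, 0) = f x
  init_time : ∀ x, D (x, 0) (0, 1) = g x
  init_space : ∀ x v, D (x, 0) (v, 0) = fderiv ℝ f x v

theorem isDampedWave_of_classical {f g : EuclideanSpace ℝ (Fin n) → ℝ} {u : EuclideanSpace ℝ (Fin n) → ℝ → ℝ}
    (hreg : ContDiffOn ℝ 2 (fun p : EuclideanSpace ℝ (Fin n) × ℝ => u p.1 p.2) (univ ×ˢ Ici 0))
    (hpde : ∀ x, ∀ t > (0 : ℝ),
      deriv (deriv (fun s => u x s)) t - lap (fun z => u z t) x
        + deriv (fun s => u x s) t = 0)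
    (hu0 : ∀ x, u x 0 = f x)
    (hu1 : ∀ x, derivWithin (fun s => u x s) (Ici 0) 0 = g x) :
    ∃ D H, IsDampedWave (fun p : EuclideanSpace ℝ (Fin n) × ℝ => u p.1 p.2) D H f g := by
  set U : EuclideanSpace ℝ (Fin n) × ℝ → ℝ := fun p => u p.1 p.2 with hU
  set S : Set (EuclideanSpace ℝ (Fin n) × ℝ) := univ ×ˢ Ici 0 with hS
  have hSu : UniqueDiffOn ℝ S := uniqueDiffOn_univ.prod (uniqueDiffOn_Ici 0)
  have hnhds : ∀ p : EuclideanSpace ℝ (Fin n) × ℝ, 0 < p.2 → S ∈ 𝓝 p := fun p hp =>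
    prod_mem_nhds univ_mem (Ici_mem_nhds hp)
  set D := fderivWithin ℝ U S with hD
  have hD1 : ContDiffOn ℝ 1 D S := hreg.fderivWithin hSu (by norm_num)
  have hUat : ∀ p : EuclideanSpace ℝ (Fin n) × ℝ, 0 < p.2 → ContDiffAt ℝ 2 U p := fun p hp =>
    hreg.contDiffAt (hnhds p hp)
  have hDeq : ∀ p : EuclideanSpace ℝ (Fin n) × ℝ, 0 < p.2 → D p = fderiv ℝ U p := fun p hp =>
    fderivWithin_of_mem_nhds (hnhds p hp)
  have hDev : ∀ p : EuclideanSpace ℝ (Fin n) × ℝ, 0 < p.2 → D =ᶠ[𝓝 p] fderiv ℝ U := by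
    intro p hp
    filter_upwards [(isOpen_lt continuous_const continuous_snd).mem_nhds hp] with q hq
    exact hDeq q hq
  have dU : ∀ p : EuclideanSpace ℝ (Fin n) × ℝ, 0 < p.2 → HasFDerivAt U (D p) p := fun p hp => by
    rw [hDeq p hp]
    exact ((hUat p hp).differentiableAt (by norm_num)).hasFDerivAt
  have dD : ∀ p : EuclideanSpace ℝ (Fin n) × ℝ, 0 < p.2 → HasFDerivAt D (fderiv ℝ D p) p := fun p hp =>
    ((hD1.contDiffAt (hnhds p hp)).differentiableAt (by norm_num)).hasFDerivAt
  have hwithin : ∀ x, HasFDerivWithinAt U (D (x, 0)) S (x, 0) := fun x =>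
    ((hreg.differentiableOn (by norm_num)) (x, 0) ⟨mem_univ _, le_refl (0:ℝ)⟩).hasFDerivWithinAt
  -- derivatives along lines
  have dt1 : ∀ x t, 0 < t → HasDerivAt (fun s => u x s) (D (x, t) (0, 1)) t := by
    intro x t ht
    have := (dU (x, t) ht).comp_hasDerivAt t
      ((hasDerivAt_const t x).prodMk (hasDerivAt_id t))
    exact this
  have dt2 : ∀ x t, 0 < t → HasDerivAt (deriv (fun s => u x s))
      (fderiv ℝ D (x, t) (0, 1) (0, 1)) t := by
    intro x t ht
    have := (dD (x, t) ht).comp_hasDerivAt t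
      ((hasDerivAt_const t x).prodMk (hasDerivAt_id t))
    have h2 := this.clm_apply (hasDerivAt_const t ((0, 1) : EuclideanSpace ℝ (Fin n) × ℝ))
    simp only [map_zero, add_zero] at h2
    refine h2.congr_of_eventuallyEq ?_
    filter_upwards [Ioi_mem_nhds ht] with s hs
    exact (dt1 x s hs).deriv
  have dx1 : ∀ x t v (a : ℝ), 0 < t → HasDerivAt (fun a : ℝ => u (x + a • v) t)
      (D (x + a • v, t) (v, 0)) a := by
    intro x t v a ht
    have hl : HasDerivAt (fun a : ℝ => (x + a • v, t)) (v, (0 : ℝ)) a := by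
      refine HasDerivAt.prodMk ?_ (hasDerivAt_const a t)
      simpa using ((hasDerivAt_id a).smul_const v).const_add x
    exact (dU (x + a • v, t) ht).comp_hasDerivAt a hl
  have dx2 : ∀ x t v, 0 < t → iteratedDeriv 2 (fun a : ℝ => u (x + a • v) t) 0
      = fderiv ℝ D (x, t) (v, 0) (v, 0) := by
    intro x t v ht
    have hl : HasDerivAt (fun a : ℝ => (x + a • v, t)) (v, (0 : ℝ)) 0 := by
      refine HasDerivAt.prodMk ?_ (hasDerivAt_const _ t)
      simpa using ((hasDerivAt_id (0:ℝ)).smul_const v).const_add x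
    have h2 := ((dD (x, t) ht).comp_hasDerivAt_of_eq (0 : ℝ) hl (by simp)).clm_apply
      (hasDerivAt_const (0:ℝ) ((v, 0) : EuclideanSpace ℝ (Fin n) × ℝ))
    simp only [map_zero, add_zero] at h2
    rw [iteratedDeriv_succ, iteratedDeriv_one]
    have : deriv (fun a : ℝ => u (x + a • v) t) = fun a => D (x + a • v, t) (v, 0) := by
      ext a; exact (dx1 x t v a ht).deriv
    rw [this]
    exact h2.deriv
  refine ⟨D, fderiv ℝ D, ⟨hreg.continuousOn, hD1.continuousOn, ?_, dU, dD, ?_, ?_, hu0, ?_, ?_⟩⟩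
  · have : ContDiffOn ℝ 1 D (univ ×ˢ Ioi 0) :=
      hD1.mono (prod_mono le_rfl Ioi_subset_Ici_self)
    exact this.continuousOn_fderiv_of_isOpen (isOpen_univ.prod isOpen_Ioi) le_rfl
  · intro p hp v w
    have := ((hUat p hp).isSymmSndFDerivAt (by simp)) v w
    rwa [← (hDev p hp).fderiv_eq] at this
  · rintro ⟨x, t⟩ ht
    have h := hpde x t ht
    rw [(dt2 x t ht).deriv, (dt1 x t ht).deriv] at h
    have hl : lap (fun z => u z t) x = ∑ i, fderiv ℝ D (x, t) (EuclideanSpace.single i 1, 0)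
        (EuclideanSpace.single i 1, 0) := Finset.sum_congr rfl fun i _ => dx2 x t _ ht
    rwa [hl] at h
  · intro x
    have hl : HasDerivWithinAt (fun s : ℝ => (x, s)) ((0 : EuclideanSpace ℝ (Fin n)), (1 : ℝ)) (Ici 0) 0 :=
      ((hasDerivAt_const _ x).prodMk (hasDerivAt_id _)).hasDerivWithinAt
    have := (hwithin x).comp_hasDerivWithinAt (0 : ℝ) hl (fun s hs => ⟨mem_univ _, hs⟩)
    rw [← hu1 x]
    exact (this.derivWithin (uniqueDiffOn_Ici (0:ℝ) 0 self_mem_Ici)).symm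
  · intro x v
    have hl : HasFDerivWithinAt (fun z : EuclideanSpace ℝ (Fin n) => (z, (0:ℝ)))
        (ContinuousLinearMap.inl ℝ (EuclideanSpace ℝ (Fin n)) ℝ) univ x :=
      (hasFDerivAt_prodMk_left x (0:ℝ)).hasFDerivWithinAt
    have hm : MapsTo (fun z : EuclideanSpace ℝ (Fin n) => (z, (0:ℝ))) univ S :=
      fun z _ => ⟨mem_univ _, le_refl (0:ℝ)⟩
    have := (hwithin x).comp x hl hm
    rw [hasFDerivWithinAt_univ] at this
    have h2 : (U ∘ fun z : EuclideanSpace ℝ (Fin n) => (z, (0:ℝ))) = f := by ext z; exact hu0 z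
    rw [h2] at this
    rw [this.fderiv]; simp

section
namespace IsDampedWave

variable {U : EuclideanSpace ℝ (Fin n) × ℝ → ℝ} {D : EuclideanSpace ℝ (Fin n) × ℝ → (EuclideanSpace ℝ (Fin n) × ℝ →L[ℝ] ℝ)}
  {H : EuclideanSpace ℝ (Fin n) × ℝ → (EuclideanSpace ℝ (Fin n) × ℝ →L[ℝ] EuclideanSpace ℝ (Fin n) × ℝ →L[ℝ] ℝ)} {f g : EuclideanSpace ℝ (Fin n) → ℝ}

theorem hasDerivAt_time (hw : IsDampedWave U D H f g) (x : EuclideanSpace ℝ (Fin n)) {t : ℝ} (ht : 0 < t) :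
    HasDerivAt (fun s => U (x, s)) (D (x, t) (0, 1)) t :=
  (hw.derivU (x, t) ht).comp_hasDerivAt t ((hasDerivAt_const t x).prodMk (hasDerivAt_id t))

theorem hasDerivAt_time_D (hw : IsDampedWave U D H f g) (x : EuclideanSpace ℝ (Fin n)) {t : ℝ} (ht : 0 < t)
    (w : EuclideanSpace ℝ (Fin n) × ℝ) : HasDerivAt (fun s => D (x, s) w) (H (x, t) (0, 1) w) t := by
  have := ((hw.derivD (x, t) ht).comp_hasDerivAt t
    ((hasDerivAt_const t x).prodMk (hasDerivAt_id t))).clm_apply (hasDerivAt_const t w)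
  simpa using this

theorem hasDerivAt_line (x v : EuclideanSpace ℝ (Fin n)) (t : ℝ) :
    HasDerivAt (fun a : ℝ => (x + a • v, t)) (v, (0 : ℝ)) 0 := by
  refine HasDerivAt.prodMk ?_ (hasDerivAt_const _ t)
  simpa using ((hasDerivAt_id (0 : ℝ)).smul_const v).const_add x

theorem hasLineDerivAt (hw : IsDampedWave U D H f g) (x v : EuclideanSpace ℝ (Fin n)) {t : ℝ} (ht : 0 < t) :
    HasLineDerivAt ℝ (fun z => U (z, t)) (D (x, t) (v, 0)) x v :=
  (hw.derivU (x, t) ht).comp_hasDerivAt_of_eq (0 : ℝ) (hasDerivAt_line x v t) (by simp)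

theorem hasLineDerivAt_D (hw : IsDampedWave U D H f g) (x v : EuclideanSpace ℝ (Fin n)) {t : ℝ} (ht : 0 < t)
    (w : EuclideanSpace ℝ (Fin n) × ℝ) : HasLineDerivAt ℝ (fun z => D (z, t) w) (H (x, t) (v, 0) w) x v := by
  have := ((hw.derivD (x, t) ht).comp_hasDerivAt_of_eq (0 : ℝ) (hasDerivAt_line x v t)
    (by simp)).clm_apply (hasDerivAt_const (0 : ℝ) w)
  unfold HasLineDerivAt
  simpa using this

theorem continuous_U (hw : IsDampedWave U D H f g) {t : ℝ} (ht : 0 ≤ t) :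
    Continuous fun x => U (x, t) :=
  hw.contU.comp_continuous (by fun_prop) fun _ => ⟨mem_univ _, ht⟩

theorem continuous_D (hw : IsDampedWave U D H f g) {t : ℝ} (ht : 0 ≤ t) :
    Continuous fun x => D (x, t) :=
  hw.contD.comp_continuous (by fun_prop) fun _ => ⟨mem_univ _, ht⟩

theorem continuous_H (hw : IsDampedWave U D H f g) {t : ℝ} (ht : 0 < t) :
    Continuous fun x => H (x, t) :=
  hw.contH.comp_continuous (by fun_prop) fun _ => ⟨mem_univ _, ht⟩

theorem continuousOn_D_apply (hw : IsDampedWave U D H f g) (w : EuclideanSpace ℝ (Fin n) × ℝ) :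
    ContinuousOn (fun p => D p w) (univ ×ˢ Ici 0) :=
  hw.contD.clm_apply continuousOn_const

theorem continuousOn_H_apply (hw : IsDampedWave U D H f g) (v w : EuclideanSpace ℝ (Fin n) × ℝ) :
    ContinuousOn (fun p => H p v w) (univ ×ˢ Ioi 0) :=
  (hw.contH.clm_apply continuousOn_const).clm_apply continuousOn_const

end IsDampedWave
end

theorem deriv_expNegInvGlue_nonneg (s : ℝ) : 0 ≤ deriv expNegInvGlue s :=
  (expNegInvGlue.monotone).deriv_nonneg

theorem deriv_expNegInvGlue_of_neg {s : ℝ} (hs : s < 0) : deriv expNegInvGlue s = 0 := by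
  have : expNegInvGlue =ᶠ[𝓝 s] fun _ => 0 := by
    filter_upwards [Iio_mem_nhds hs] with r hr
    exact expNegInvGlue.zero_of_nonpos (le_of_lt hr)
  rw [this.deriv_eq, deriv_const]

theorem continuous_deriv_expNegInvGlue : Continuous (deriv expNegInvGlue) :=
  (expNegInvGlue.contDiff (n := 1)).continuous_deriv le_rfl

theorem hasDerivAt_expNegInvGlue (s : ℝ) :
    HasDerivAt expNegInvGlue (deriv expNegInvGlue s) s :=
  ((expNegInvGlue.contDiff (n := 1)).differentiable (by norm_num) s).hasDerivAt

/-- The parabolic cut-off phase used in the local energy estimate. -/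
def conePhase (x₀ : EuclideanSpace ℝ (Fin n)) (t₀ : ℝ) (p : EuclideanSpace ℝ (Fin n) × ℝ) : ℝ :=
  9 * t₀ ^ 2 - 6 * t₀ * p.2 - ‖p.1 - x₀‖ ^ 2

theorem continuous_conePhase (x₀ : EuclideanSpace ℝ (Fin n)) (t₀ : ℝ) : Continuous (conePhase x₀ t₀) := by
  unfold conePhase; fun_prop

theorem hasDerivAt_conePhase_time (x₀ x : EuclideanSpace ℝ (Fin n)) (t₀ t : ℝ) :
    HasDerivAt (fun s => conePhase x₀ t₀ (x, s)) (-(6 * t₀)) t := by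
  unfold conePhase
  simpa using (((hasDerivAt_id t).const_mul (6 * t₀)).const_sub (9 * t₀ ^ 2)).sub_const
    (‖x - x₀‖ ^ 2)

theorem hasLineDerivAt_conePhase (x₀ x : EuclideanSpace ℝ (Fin n)) (t₀ t : ℝ) (i : Fin n) :
    HasLineDerivAt ℝ (fun z => conePhase x₀ t₀ (z, t)) (-(2 * (x - x₀) i)) x
      (EuclideanSpace.single i 1) := by
  unfold conePhase
  have h1 : HasDerivAt (fun a : ℝ => (x + a • EuclideanSpace.single i (1 : ℝ)) - x₀)
      (EuclideanSpace.single i (1 : ℝ)) 0 := by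
    simpa using (((hasDerivAt_id (0 : ℝ)).smul_const
      (EuclideanSpace.single i (1 : ℝ))).const_add x).sub_const x₀
  have h2 := (h1.norm_sq).const_sub (9 * t₀ ^ 2 - 6 * t₀ * t)
  unfold HasLineDerivAt
  simpa [EuclideanSpace.inner_single_right] using h2

theorem conePhase_neg {x₀ x : EuclideanSpace ℝ (Fin n)} {t₀ t : ℝ} (h0 : 0 < t₀) (ht : 0 ≤ t)
    (hx : x ∉ closedBall x₀ (3 * t₀)) : conePhase x₀ t₀ (x, t) < 0 := by
  rw [mem_closedBall, dist_eq_norm, not_le] at hx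
  unfold conePhase
  have : 0 ≤ t₀ * t := by positivity
  nlinarith

theorem energy_flux_le {ι : Type*} [Fintype ι] {t₀ a η ζ h : ℝ} (z d b c : ι → ℝ) (h0 : 0 < t₀)
    (hη : 0 ≤ η) (hζ : 0 ≤ ζ) (hz : η = 0 ∨ ∑ i, z i ^ 2 ≤ 9 * t₀ ^ 2)
    (hpde : h - ∑ i, c i + a = 0) :
    (η * (-(6 * t₀)) * (a ^ 2 + ∑ i, d i ^ 2) + ζ * (2 * a * h + ∑ i, 2 * d i * b i))
      - 2 * ∑ i, (η * (-(2 * z i)) * (a * d i) + ζ * (c i * a + b i * d i)) ≤ 0 := by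
  have e1 : ∑ i, (η * (-(2 * z i)) * (a * d i) + ζ * (c i * a + b i * d i))
      = -2 * η * a * ∑ i, z i * d i + ζ * a * ∑ i, c i + ζ * ∑ i, b i * d i := by
    simp only [Finset.mul_sum, ← Finset.sum_add_distrib]
    exact Finset.sum_congr rfl fun i _ => by ring
  have e2 : ∑ i, 2 * d i * b i = 2 * ∑ i, b i * d i := by
    simp only [Finset.mul_sum]
    exact Finset.sum_congr rfl fun i _ => by ring
  rw [e1, e2]
  have hc : ∑ i, c i = h + a := by linarith
  rw [hc]
  set S := ∑ i, z i * d i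
  set Q := ∑ i, d i ^ 2
  have hmain : η * (4 * a * S) ≤ η * (6 * t₀ * (a ^ 2 + Q)) := by
    rcases hz with hz | hz
    · simp [hz]
    · refine mul_le_mul_of_nonneg_left ?_ hη
      have hS : S ^ 2 ≤ 9 * t₀ ^ 2 * Q :=
        (Finset.sum_mul_sq_le_sq_mul_sq _ _ _).trans
          (mul_le_mul_of_nonneg_right hz (Finset.sum_nonneg fun i _ => sq_nonneg _))
      have h1 : t₀ * (6 * t₀ * (a ^ 2 + Q) - 4 * a * S) ≥ 0 := by
        nlinarith [sq_nonneg (3 * t₀ * a - S)]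
      have := nonneg_of_mul_nonneg_right h1 h0
      linarith
  nlinarith [mul_nonneg hζ (sq_nonneg a)]

theorem IsDampedWave.eq_zero_of_far {U : EuclideanSpace ℝ (Fin n) × ℝ → ℝ}
    {D : EuclideanSpace ℝ (Fin n) × ℝ → (EuclideanSpace ℝ (Fin n) × ℝ →L[ℝ] ℝ)}
    {H : EuclideanSpace ℝ (Fin n) × ℝ → (EuclideanSpace ℝ (Fin n) × ℝ →L[ℝ]
      EuclideanSpace ℝ (Fin n) × ℝ →L[ℝ] ℝ)} {f g : EuclideanSpace ℝ (Fin n) → ℝ}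
    (hw : IsDampedWave U D H f g) {R : ℝ} (hf : ∀ x, R < ‖x‖ → f x = 0)
    (hg : ∀ x, R < ‖x‖ → g x = 0) {t₀ : ℝ} (h0 : 0 < t₀) {x₀ : EuclideanSpace ℝ (Fin n)}
    (hx₀ : R + 3 * t₀ < ‖x₀‖) : U (x₀, t₀) = 0 := by
  set e : Fin n → EuclideanSpace ℝ (Fin n) × ℝ := fun i => (EuclideanSpace.single i 1, 0) with he
  set τ : EuclideanSpace ℝ (Fin n) × ℝ := (0, 1) with hτ
  set q := conePhase x₀ t₀ with hq
  set η' := deriv expNegInvGlue with hη'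
  have qcont : Continuous q := continuous_conePhase x₀ t₀
  have η'cont : Continuous η' := continuous_deriv_expNegInvGlue
  have ηcont : Continuous expNegInvGlue := (expNegInvGlue.contDiff (n := 0)).continuous
  set K := closedBall x₀ (3 * t₀) with hKdef
  have hK : IsCompact K := isCompact_closedBall _ _
  have hφ0 : ∀ x ∉ K, ∀ t, 0 ≤ t → expNegInvGlue (q (x, t)) = 0 := fun x hx t ht =>
    expNegInvGlue.zero_of_nonpos (conePhase_neg h0 ht hx).le
  have hη0 : ∀ x ∉ K, ∀ t, 0 ≤ t → η' (q (x, t)) = 0 := fun x hx t ht =>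
    deriv_expNegInvGlue_of_neg (conePhase_neg h0 ht hx)
  set G : EuclideanSpace ℝ (Fin n) → ℝ → ℝ := fun x t =>
    expNegInvGlue (q (x, t)) * (D (x, t) τ ^ 2 + ∑ i, D (x, t) (e i) ^ 2) with hGdef
  set G' : EuclideanSpace ℝ (Fin n) → ℝ → ℝ := fun x t =>
    η' (q (x, t)) * (-(6 * t₀)) * (D (x, t) τ ^ 2 + ∑ i, D (x, t) (e i) ^ 2)
      + expNegInvGlue (q (x, t)) * (2 * D (x, t) τ * H (x, t) τ τ
        + ∑ i, 2 * D (x, t) (e i) * H (x, t) τ (e i)) with hG'def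
  set B : Fin n → EuclideanSpace ℝ (Fin n) → ℝ → ℝ := fun i x t =>
    η' (q (x, t)) * (-(2 * (x - x₀) i)) * (D (x, t) τ * D (x, t) (e i))
      + expNegInvGlue (q (x, t)) * (H (x, t) (e i) (e i) * D (x, t) τ
        + H (x, t) τ (e i) * D (x, t) (e i)) with hBdef
  have cD : ∀ w, ContinuousOn (fun p => D p w) (univ ×ˢ Ici 0) := hw.continuousOn_D_apply
  have cD' : ∀ w, ContinuousOn (fun p => D p w) (univ ×ˢ Ioi 0) := fun w =>
    (cD w).mono (prod_mono le_rfl Ioi_subset_Ici_self)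
  have cH : ∀ v w, ContinuousOn (fun p => H p v w) (univ ×ˢ Ioi 0) := hw.continuousOn_H_apply
  have hGc : ContinuousOn (Function.uncurry G) (univ ×ˢ Ici 0) := by
    change ContinuousOn (fun p => expNegInvGlue (q p) * (D p τ ^ 2 + ∑ i, D p (e i) ^ 2)) _
    refine (ηcont.comp qcont).continuousOn.mul (((cD τ).pow 2).add ?_)
    exact continuousOn_finsetSum _ fun i _ => (cD (e i)).pow 2
  have hG'c : ContinuousOn (Function.uncurry G') (univ ×ˢ Ioi 0) := by
    change ContinuousOn (fun p => η' (q p) * (-(6 * t₀)) * (D p τ ^ 2 + ∑ i, D p (e i) ^ 2)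
      + expNegInvGlue (q p) * (2 * D p τ * H p τ τ + ∑ i, 2 * D p (e i) * H p τ (e i))) _
    refine ContinuousOn.add ?_ ?_
    · refine ((η'cont.comp qcont).mul continuous_const).continuousOn.mul (((cD' τ).pow 2).add ?_)
      exact continuousOn_finsetSum _ fun i _ => (cD' (e i)).pow 2
    · refine (ηcont.comp qcont).continuousOn.mul
        (((continuousOn_const.mul (cD' τ)).mul (cH τ τ)).add ?_)
      exact continuousOn_finsetSum _ fun i _ =>
        (continuousOn_const.mul (cD' (e i))).mul (cH τ (e i))
  have hBc : ∀ i, ContinuousOn (Function.uncurry (B i)) (univ ×ˢ Ioi 0) := by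
    intro i
    change ContinuousOn (fun p => η' (q p) * (-(2 * (p.1 - x₀) i)) * (D p τ * D p (e i))
      + expNegInvGlue (q p) * (H p (e i) (e i) * D p τ + H p τ (e i) * D p (e i))) _
    have hz : Continuous fun p : EuclideanSpace ℝ (Fin n) × ℝ => (p.1 - x₀) i := by fun_prop
    refine ContinuousOn.add ?_ ?_
    · exact ((η'cont.comp qcont).mul (continuous_const.mul hz).neg).continuousOn.mul
        ((cD' τ).mul (cD' (e i)))
    · exact (ηcont.comp qcont).continuousOn.mul
        (((cH _ _).mul (cD' τ)).add ((cH _ _).mul (cD' (e i))))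
  have slice : ∀ (Φ : EuclideanSpace ℝ (Fin n) → ℝ → ℝ),
      ContinuousOn (Function.uncurry Φ) (univ ×ˢ Ioi 0) → ∀ t, 0 < t →
      Continuous fun x => Φ x t := fun Φ hΦ t ht =>
    hΦ.comp_continuous (f := fun x => (x, t)) (by fun_prop) fun x => ⟨mem_univ _, ht⟩
  have hGd : ∀ x t, 0 < t → HasDerivAt (G x) (G' x t) t := by
    intro x t ht
    have h1 := (hasDerivAt_expNegInvGlue (q (x, t))).comp t (hasDerivAt_conePhase_time x₀ x t₀ t)
    have h2 := ((hw.hasDerivAt_time_D x ht τ).pow 2).add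
      (HasDerivAt.fun_sum (u := Finset.univ) fun i _ => (hw.hasDerivAt_time_D x ht (e i)).pow 2)
    have h3 := h1.mul h2
    refine h3.congr_deriv ?_
    simp [hG'def, hη', hq, hτ]
  have hBd : ∀ i x t, 0 < t → HasLineDerivAt ℝ
      (fun z => expNegInvGlue (q (z, t)) * (D (z, t) τ * D (z, t) (e i))) (B i x t) x
      (EuclideanSpace.single i 1) := by
    intro i x t ht
    have h1 := (hasDerivAt_expNegInvGlue (q (x, t))).comp_of_eq (0 : ℝ)
      (hasLineDerivAt_conePhase x₀ x t₀ t i) (by simp [hq])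
    have h2 := HasDerivAt.mul (hw.hasLineDerivAt_D x (EuclideanSpace.single i 1) ht τ)
      (hw.hasLineDerivAt_D x (EuclideanSpace.single i 1) ht (e i))
    have h3 := HasDerivAt.mul h1 h2
    unfold HasLineDerivAt
    refine h3.congr_deriv ?_
    have hs := hw.symm (x, t) ht (e i) τ
    simp only [he, hτ] at hs
    simp [hBdef, hη', hq, hτ, he, hs]
    left
    ring
  have hBint : ∀ i t, 0 < t → ∫ x, B i x t = 0 := by
    intro i t ht
    refine integral_lineDeriv_eq_zero hK ?_ (slice _ (hBc i) t ht) (fun x => hBd i x t ht) ?_ ?_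
    · have c1 := hw.continuous_D ht.le
      have c2 : Continuous fun z : EuclideanSpace ℝ (Fin n) => q (z, t) :=
        qcont.comp (by fun_prop)
      exact (ηcont.comp c2).mul
        ((c1.clm_apply continuous_const).mul (c1.clm_apply continuous_const))
    · intro x hx; simp [hφ0 x hx t ht.le]
    · intro x hx; simp [hBdef, hφ0 x hx t ht.le, hη0 x hx t ht.le]
  have hG'le : ∀ t, 0 < t → ∫ x, G' x t ≤ 0 := by
    intro t ht
    have iG : Integrable (fun x => G' x t) :=
      (slice _ hG'c t ht).integrable_of_hasCompactSupport
        (HasCompactSupport.intro hK fun x hx => by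
          simp [hG'def, hφ0 x hx t ht.le, hη0 x hx t ht.le])
    have iB : ∀ i, Integrable (fun x => B i x t) := fun i =>
      (slice _ (hBc i) t ht).integrable_of_hasCompactSupport
        (HasCompactSupport.intro hK fun x hx => by
          simp [hBdef, hφ0 x hx t ht.le, hη0 x hx t ht.le])
    have h1 : ∫ x, G' x t = ∫ x, (G' x t - 2 * ∑ i, B i x t) := by
      rw [integral_sub iG ((integrable_finsetSum _ fun i _ => iB i).const_mul 2),
        integral_const_mul, integral_finsetSum _ fun i _ => iB i]
      simp [hBint _ t ht]
    rw [h1]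
    refine integral_nonpos fun x => ?_
    refine energy_flux_le (fun i => (x - x₀) i) (fun i => D (x, t) (e i))
      (fun i => H (x, t) τ (e i)) (fun i => H (x, t) (e i) (e i)) h0
      (deriv_expNegInvGlue_nonneg _) (expNegInvGlue.nonneg _) ?_ (hw.pde (x, t) ht)
    by_cases hx : x ∈ K
    · right
      rw [← EuclideanSpace.real_norm_sq_eq]
      rw [hKdef, mem_closedBall, dist_eq_norm] at hx
      nlinarith [norm_nonneg (x - x₀)]
    · left; exact hη0 x hx t ht.le
  set F : ℝ → ℝ := fun t => ∫ x, G x t with hF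
  have hFd : ∀ t, 0 < t → HasDerivAt F (∫ x, G' x t) t := by
    intro t ht
    have hsub : (univ : Set (EuclideanSpace ℝ (Fin n))) ×ˢ Ioo 0 (t + 1) ⊆ univ ×ˢ Ioi 0 :=
      prod_mono le_rfl Ioo_subset_Ioi_self
    refine hasDerivAt_integral_of_compact hK (a := 0) (b := t + 1) ⟨ht, by linarith⟩
      ((hGc.mono (prod_mono le_rfl Ioi_subset_Ici_self)).mono hsub) (hG'c.mono hsub)
      (fun x s hs => hGd x s hs.1) ?_
    intro x hx s hs
    simp [hGdef, hφ0 x hx s hs.1.le]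
  have hFc : ContinuousOn F (Ici 0) := by
    refine continuousOn_integral_of_compact_support (f := fun t x => G x t) hK ?_ ?_
    · exact hGc.comp (f := Prod.swap) continuous_swap.continuousOn
        fun p hp => ⟨mem_univ _, hp.1⟩
    · intro t x ht hx
      simp [hGdef, hφ0 x hx t ht]
  have hF0 : F 0 = 0 := by
    rw [hF]
    refine integral_eq_zero_of_ae (ae_of_all _ fun x => ?_)
    by_cases hx : x ∈ K
    · have hxR : R < ‖x‖ := by
        rw [hKdef, mem_closedBall, dist_eq_norm] at hx
        have := norm_sub_norm_le x₀ x
        rw [norm_sub_rev] at this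
        linarith
      have hfz : fderiv ℝ f x = 0 := by
        have : f =ᶠ[𝓝 x] fun _ => 0 := by
          filter_upwards [(isOpen_lt continuous_const continuous_norm).mem_nhds hxR] with y hy
          exact hf y hy
        rw [this.fderiv_eq]; simp
      simp [hGdef, hτ, he, hw.init_time, hw.init_space, hfz, hg x hxR]
    · simp [hGdef, hφ0 x hx 0 le_rfl]
  have hanti : AntitoneOn F (Ici 0) := by
    refine antitoneOn_of_deriv_nonpos (convex_Ici 0) hFc ?_ ?_
    · intro t ht
      rw [interior_Ici] at ht
      exact (hFd t ht).differentiableAt.differentiableWithinAt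
    · intro t ht
      rw [interior_Ici] at ht
      rw [(hFd t ht).deriv]; exact hG'le t ht
  have hGnn : ∀ x t, 0 ≤ G x t := fun x t => mul_nonneg (expNegInvGlue.nonneg _)
    (add_nonneg (sq_nonneg _) (Finset.sum_nonneg fun i _ => sq_nonneg _))
  have hD0 : ∀ t ∈ Ioc 0 t₀, D (x₀, t) τ = 0 := by
    intro t ht
    have hFt : F t = 0 := by
      refine le_antisymm ?_ (integral_nonneg fun x => hGnn x t)
      rw [← hF0]
      exact hanti self_mem_Ici ht.1.le ht.1.le
    have hc : Continuous fun x => G x t :=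
      slice _ (hGc.mono (prod_mono le_rfl Ioi_subset_Ici_self)) t ht.1
    have hi : Integrable (fun x => G x t) :=
      hc.integrable_of_hasCompactSupport (HasCompactSupport.intro hK fun x hx => by
        simp [hGdef, hφ0 x hx t ht.1.le])
    have hz := (integral_eq_zero_iff_of_nonneg (fun x => hGnn x t) hi).1 hFt
    have hz' := (Continuous.ae_eq_iff_eq volume hc continuous_zero).1 hz
    have hx := congrFun hz' x₀
    have hqp : 0 < q (x₀, t) := by
      simp only [hq, conePhase, sub_self, norm_zero]
      nlinarith [ht.1, ht.2]
    have hφp : 0 < expNegInvGlue (q (x₀, t)) := expNegInvGlue.pos_of_pos hqp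
    have hs : D (x₀, t) τ ^ 2 + ∑ i, D (x₀, t) (e i) ^ 2 = 0 := by
      rcases mul_eq_zero.1 hx with h | h
      · exact absurd h hφp.ne'
      · exact h
    have : 0 ≤ ∑ i, D (x₀, t) (e i) ^ 2 := Finset.sum_nonneg fun i _ => sq_nonneg _
    nlinarith [sq_nonneg (D (x₀, t) τ)]
  have hconst : U (x₀, t₀) = U (x₀, 0) := by
    obtain ⟨c, hc, hce⟩ := exists_hasDerivAt_eq_slope (fun s => U (x₀, s)) (fun s => D (x₀, s) τ)
      h0 (hw.contU.comp (f := fun s : ℝ => (x₀, s)) (by fun_prop)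
        fun s hs => ⟨mem_univ _, hs.1⟩) fun s hs => hw.hasDerivAt_time x₀ hs.1
    rw [hD0 c ⟨hc.1, hc.2.le⟩, eq_comm, div_eq_zero_iff] at hce
    rcases hce with h | h
    · exact sub_eq_zero.1 h
    · linarith
  rw [hconst, hw.init, hf x₀ (by linarith)]

section
open scoped FourierTransform
open Complex (I)

/-- The Fourier character `x ↦ exp(-2πi⟨x, ξ⟩)`. -/
def fourierKer (ξ x : EuclideanSpace ℝ (Fin n)) : ℂ :=
  Complex.exp (↑(-2 * π * inner ℝ x ξ) * I)

theorem continuous_fourierKer (ξ : EuclideanSpace ℝ (Fin n)) : Continuous (fourierKer ξ) := by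
  unfold fourierKer; fun_prop

theorem fourier_eq_integral_fourierKer (w : EuclideanSpace ℝ (Fin n) → ℂ)
    (ξ : EuclideanSpace ℝ (Fin n)) : 𝓕 w ξ = ∫ x, fourierKer ξ x * w x := by
  rw [Real.fourier_eq']; rfl

theorem hasLineDerivAt_fourierKer (ξ x v : EuclideanSpace ℝ (Fin n)) :
    HasLineDerivAt ℝ (fourierKer ξ) (-(2 * π * inner ℝ v ξ * I) * fourierKer ξ x) x v := by
  unfold HasLineDerivAt fourierKer
  have h1 : HasDerivAt (fun a : ℝ => (-2 * π * inner ℝ (x + a • v) ξ : ℝ))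
      (-2 * π * inner ℝ v ξ) 0 := by
    have : (fun a : ℝ => (-2 * π * inner ℝ (x + a • v) ξ : ℝ))
        = fun a => -2 * π * (inner ℝ x ξ + a * inner ℝ v ξ) := by
      ext a; rw [inner_add_left, real_inner_smul_left]
    rw [this]
    simpa using (((hasDerivAt_id (0 : ℝ)).mul_const (inner ℝ v ξ)).const_add
      (inner ℝ x ξ)).const_mul (-2 * π)
  have h2 := (h1.ofReal_comp.mul_const I).cexp
  refine h2.congr_deriv ?_
  simp
  ring

/-- The Fourier transform of a directional derivative of a compactly supported function. -/
theorem fourier_lineDeriv {w w' : EuclideanSpace ℝ (Fin n) → ℝ}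
    {v : EuclideanSpace ℝ (Fin n)} {K : Set (EuclideanSpace ℝ (Fin n))} (hK : IsCompact K)
    (hw : Continuous w) (hw' : Continuous w') (hd : ∀ x, HasLineDerivAt ℝ w (w' x) x v)
    (h0 : ∀ x ∉ K, w x = 0) (h0' : ∀ x ∉ K, w' x = 0) (ξ : EuclideanSpace ℝ (Fin n)) :
    𝓕 (fun x => (w' x : ℂ)) ξ = 2 * π * inner ℝ v ξ * I * 𝓕 (fun x => (w x : ℂ)) ξ := by
  rw [fourier_eq_integral_fourierKer, fourier_eq_integral_fourierKer]
  have hc := continuous_fourierKer ξ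
  have hint : ∀ {a : EuclideanSpace ℝ (Fin n) → ℝ}, Continuous a → (∀ x ∉ K, a x = 0) →
      Integrable fun x => fourierKer ξ x * (a x : ℂ) := by
    intro a ha ha0
    exact (hc.mul (Complex.continuous_ofReal.comp ha)).integrable_of_hasCompactSupport
      (HasCompactSupport.intro hK fun x hx => by simp [ha0 x hx])
  have := integral_bilinear_hasLineDerivAt_right_eq_neg_left_of_integrable (μ := volume)
    (f := fourierKer ξ) (f' := fun x => -(2 * π * inner ℝ v ξ * I) * fourierKer ξ x)
    (g := fun x => (w x : ℂ)) (g' := fun x => (w' x : ℂ)) (v := v)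
    (B := ContinuousLinearMap.mul ℝ ℂ) ?_ ?_ ?_ (fun x _ => hasLineDerivAt_fourierKer ξ x v)
    (fun x _ => HasDerivAt.ofReal_comp (hd x))
  · simp only [ContinuousLinearMap.mul_apply'] at this
    rw [this, ← integral_const_mul, ← integral_neg]
    congr 1; ext x; ring
  · simpa [mul_assoc] using (hint hw h0).const_mul (-(2 * π * inner ℝ v ξ * I))
  · simpa using hint hw' h0'
  · simpa using hint hw h0

namespace IsDampedWave

variable {U : EuclideanSpace ℝ (Fin n) × ℝ → ℝ}
  {D : EuclideanSpace ℝ (Fin n) × ℝ → (EuclideanSpace ℝ (Fin n) × ℝ →L[ℝ] ℝ)}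
  {H : EuclideanSpace ℝ (Fin n) × ℝ → (EuclideanSpace ℝ (Fin n) × ℝ →L[ℝ]
    EuclideanSpace ℝ (Fin n) × ℝ →L[ℝ] ℝ)} {f g : EuclideanSpace ℝ (Fin n) → ℝ} {R : ℝ}

theorem U_eq_zero (hw : IsDampedWave U D H f g) (hf : ∀ x, R < ‖x‖ → f x = 0)
    (hg : ∀ x, R < ‖x‖ → g x = 0) {p : EuclideanSpace ℝ (Fin n) × ℝ} (ht : 0 ≤ p.2)
    (hx : R + 3 * p.2 < ‖p.1‖) : U p = 0 := by
  obtain ⟨x, t⟩ := p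
  rcases ht.eq_or_lt with h | h
  · simp only at h hx
    subst h
    rw [hw.init, hf x (by linarith)]
  · exact hw.eq_zero_of_far hf hg h hx

theorem eventually_far {p : EuclideanSpace ℝ (Fin n) × ℝ} (ht : 0 < p.2)
    (hx : R + 3 * p.2 < ‖p.1‖) : ∀ᶠ r in 𝓝 p, 0 < r.2 ∧ R + 3 * r.2 < ‖r.1‖ :=
  (((isOpen_lt continuous_const continuous_snd).inter
    (isOpen_lt (by fun_prop) (by fun_prop))).mem_nhds ⟨ht, hx⟩ :
      {r : EuclideanSpace ℝ (Fin n) × ℝ | 0 < r.2} ∩ {r | R + 3 * r.2 < ‖r.1‖} ∈ 𝓝 p)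

theorem D_eq_zero_of_pos (hw : IsDampedWave U D H f g) (hf : ∀ x, R < ‖x‖ → f x = 0)
    (hg : ∀ x, R < ‖x‖ → g x = 0) {p : EuclideanSpace ℝ (Fin n) × ℝ} (ht : 0 < p.2)
    (hx : R + 3 * p.2 < ‖p.1‖) : D p = 0 := by
  have h : U =ᶠ[𝓝 p] fun _ => 0 := by
    filter_upwards [eventually_far ht hx] with r hr
    exact hw.U_eq_zero hf hg hr.1.le hr.2
  exact (hw.derivU p ht).unique ((hasFDerivAt_const (0 : ℝ) p).congr_of_eventuallyEq h)

theorem H_eq_zero_of_pos (hw : IsDampedWave U D H f g) (hf : ∀ x, R < ‖x‖ → f x = 0)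
    (hg : ∀ x, R < ‖x‖ → g x = 0) {p : EuclideanSpace ℝ (Fin n) × ℝ} (ht : 0 < p.2)
    (hx : R + 3 * p.2 < ‖p.1‖) : H p = 0 := by
  have h : D =ᶠ[𝓝 p] fun _ => 0 := by
    filter_upwards [eventually_far ht hx] with r hr
    exact hw.D_eq_zero_of_pos hf hg hr.1 hr.2
  exact (hw.derivD p ht).unique ((hasFDerivAt_const 0 p).congr_of_eventuallyEq h)

theorem D_time_eq_zero (hw : IsDampedWave U D H f g) (hf : ∀ x, R < ‖x‖ → f x = 0)
    (hg : ∀ x, R < ‖x‖ → g x = 0) {p : EuclideanSpace ℝ (Fin n) × ℝ} (ht : 0 ≤ p.2)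
    (hx : R + 3 * p.2 < ‖p.1‖) : D p (0, 1) = 0 := by
  obtain ⟨x, t⟩ := p
  rcases ht.eq_or_lt with h | h
  · simp only at h hx
    subst h
    rw [hw.init_time, hg x (by linarith)]
  · simp [hw.D_eq_zero_of_pos hf hg h hx]

/-- Time derivative of the Fourier transform of a time-dependent compactly supported function. -/
theorem hasDerivAt_fourier_param {G G' : EuclideanSpace ℝ (Fin n) → ℝ → ℝ}
    (hG : ContinuousOn (Function.uncurry G) (univ ×ˢ Ioi 0))
    (hG' : ContinuousOn (Function.uncurry G') (univ ×ˢ Ioi 0))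
    (hd : ∀ x, ∀ s > 0, HasDerivAt (G x) (G' x s) s)
    (h0 : ∀ x, ∀ s > 0, R + 3 * s < ‖x‖ → G x s = 0) (ξ : EuclideanSpace ℝ (Fin n))
    {t : ℝ} (ht : 0 < t) :
    HasDerivAt (fun s => 𝓕 (fun x => (G x s : ℂ)) ξ) (𝓕 (fun x => (G' x t : ℂ)) ξ) t := by
  simp only [fourier_eq_integral_fourierKer]
  have hsub : (univ : Set (EuclideanSpace ℝ (Fin n))) ×ˢ Ioo 0 (t + 1) ⊆ univ ×ˢ Ioi 0 :=
    prod_mono le_rfl Ioo_subset_Ioi_self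
  have hk : Continuous fun p : EuclideanSpace ℝ (Fin n) × ℝ => fourierKer ξ p.1 :=
    (continuous_fourierKer ξ).comp continuous_fst
  refine hasDerivAt_integral_of_compact (G := fun x s => fourierKer ξ x * (G x s : ℂ))
    (G' := fun x s => fourierKer ξ x * (G' x s : ℂ))
    (isCompact_closedBall (0 : EuclideanSpace ℝ (Fin n)) (R + 3 * (t + 1)))
    (a := 0) (b := t + 1) ⟨ht, by linarith⟩
    (hk.continuousOn.mul (Complex.continuous_ofReal.comp_continuousOn (hG.mono hsub)))
    (hk.continuousOn.mul (Complex.continuous_ofReal.comp_continuousOn (hG'.mono hsub)))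
    (fun x s hs => (hd x s hs.1).ofReal_comp.const_mul _) ?_
  intro x hx s hs
  rw [mem_closedBall_zero_iff, not_le] at hx
  simp [h0 x s hs.1 (by linarith [hs.2])]

theorem continuousOn_fourier_param {G : EuclideanSpace ℝ (Fin n) → ℝ → ℝ}
    (hG : ContinuousOn (Function.uncurry G) (univ ×ˢ Ici 0))
    (h0 : ∀ x, ∀ s ≥ 0, R + 3 * s < ‖x‖ → G x s = 0) (ξ : EuclideanSpace ℝ (Fin n)) :
    ContinuousWithinAt (fun s => 𝓕 (fun x => (G x s : ℂ)) ξ) (Ici 0) 0 := by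
  simp only [fourier_eq_integral_fourierKer]
  have hsub : (univ : Set (EuclideanSpace ℝ (Fin n))) ×ˢ Icc (0 : ℝ) 1 ⊆ univ ×ˢ Ici 0 :=
    prod_mono le_rfl Icc_subset_Ici_self
  have : ContinuousOn (fun s => ∫ x, fourierKer ξ x * (G x s : ℂ)) (Icc 0 1) := by
    refine continuousOn_integral_of_compact_support
      (f := fun s x => fourierKer ξ x * (G x s : ℂ))
      (isCompact_closedBall (0 : EuclideanSpace ℝ (Fin n)) (R + 3)) ?_ ?_
    · refine (((continuous_fourierKer ξ).comp continuous_snd).continuousOn).mul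
        (Complex.continuous_ofReal.comp_continuousOn ?_)
      exact hG.comp (f := Prod.swap) continuous_swap.continuousOn
        fun p hp => ⟨mem_univ _, hp.1.1⟩
    · intro s x hs hx
      rw [mem_closedBall_zero_iff, not_le] at hx
      simp [h0 x s hs.1 (by linarith [hs.2])]
  have h := this 0 ⟨le_rfl, zero_le_one⟩
  exact h.mono_of_mem_nhdsWithin (Icc_mem_nhdsGE zero_lt_one)

theorem fourier_space_deriv (hw : IsDampedWave U D H f g) (hf : ∀ x, R < ‖x‖ → f x = 0)
    (hg : ∀ x, R < ‖x‖ → g x = 0) {t : ℝ} (ht : 0 < t) (v ξ : EuclideanSpace ℝ (Fin n)) :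
    𝓕 (fun x => (D (x, t) (v, 0) : ℂ)) ξ
      = 2 * π * inner ℝ v ξ * I * 𝓕 (fun x => (U (x, t) : ℂ)) ξ := by
  refine fourier_lineDeriv (isCompact_closedBall (0 : EuclideanSpace ℝ (Fin n)) (R + 3 * t))
    (hw.continuous_U ht.le) ((hw.continuous_D ht.le).clm_apply continuous_const)
    (fun x => hw.hasLineDerivAt x v ht) ?_ ?_ ξ
  · intro x hx
    rw [mem_closedBall_zero_iff, not_le] at hx
    exact hw.U_eq_zero hf hg ht.le hx
  · intro x hx
    rw [mem_closedBall_zero_iff, not_le] at hx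
    simp [hw.D_eq_zero_of_pos hf hg (p := (x, t)) ht hx]

theorem fourier_space_deriv_deriv (hw : IsDampedWave U D H f g) (hf : ∀ x, R < ‖x‖ → f x = 0)
    (hg : ∀ x, R < ‖x‖ → g x = 0) {t : ℝ} (ht : 0 < t) (v ξ : EuclideanSpace ℝ (Fin n)) :
    𝓕 (fun x => (H (x, t) (v, 0) (v, 0) : ℂ)) ξ
      = 2 * π * inner ℝ v ξ * I * 𝓕 (fun x => (D (x, t) (v, 0) : ℂ)) ξ := by
  refine fourier_lineDeriv (isCompact_closedBall (0 : EuclideanSpace ℝ (Fin n)) (R + 3 * t))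
    ((hw.continuous_D ht.le).clm_apply continuous_const)
    (((hw.continuous_H ht).clm_apply continuous_const).clm_apply continuous_const)
    (fun x => hw.hasLineDerivAt_D x v ht _) ?_ ?_ ξ
  · intro x hx
    rw [mem_closedBall_zero_iff, not_le] at hx
    simp [hw.D_eq_zero_of_pos hf hg (p := (x, t)) ht hx]
  · intro x hx
    rw [mem_closedBall_zero_iff, not_le] at hx
    simp [hw.H_eq_zero_of_pos hf hg (p := (x, t)) ht hx]

theorem hasDerivAt_fourier (hw : IsDampedWave U D H f g) (hf : ∀ x, R < ‖x‖ → f x = 0)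
    (hg : ∀ x, R < ‖x‖ → g x = 0) {t : ℝ} (ht : 0 < t) (ξ : EuclideanSpace ℝ (Fin n)) :
    HasDerivAt (fun s => 𝓕 (fun x => (U (x, s) : ℂ)) ξ)
      (𝓕 (fun x => (D (x, t) (0, 1) : ℂ)) ξ) t := by
  have hs : (univ : Set (EuclideanSpace ℝ (Fin n))) ×ˢ Ioi (0 : ℝ) ⊆ univ ×ˢ Ici 0 :=
    prod_mono le_rfl Ioi_subset_Ici_self
  exact hasDerivAt_fourier_param (R := R) (G := fun x s => U (x, s))
    (G' := fun x s => D (x, s) (0, 1)) (hw.contU.mono hs)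
    ((hw.continuousOn_D_apply (0, 1)).mono hs)
    (fun x s h => hw.hasDerivAt_time x h)
    (fun x s h hx => hw.U_eq_zero hf hg (p := (x, s)) (le_of_lt h) hx) ξ ht

theorem hasDerivAt_fourier_deriv (hw : IsDampedWave U D H f g) (hf : ∀ x, R < ‖x‖ → f x = 0)
    (hg : ∀ x, R < ‖x‖ → g x = 0) {t : ℝ} (ht : 0 < t) (ξ : EuclideanSpace ℝ (Fin n)) :
    HasDerivAt (fun s => 𝓕 (fun x => (D (x, s) (0, 1) : ℂ)) ξ)
      (-((4 * π ^ 2 * ‖ξ‖ ^ 2 : ℝ) : ℂ) * 𝓕 (fun x => (U (x, t) : ℂ)) ξ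
        - 𝓕 (fun x => (D (x, t) (0, 1) : ℂ)) ξ) t := by
  have hs : (univ : Set (EuclideanSpace ℝ (Fin n))) ×ˢ Ioi (0 : ℝ) ⊆ univ ×ˢ Ici 0 :=
    prod_mono le_rfl Ioi_subset_Ici_self
  have h := hasDerivAt_fourier_param (R := R) (G := fun x s => D (x, s) (0, 1))
    (G' := fun x s => H (x, s) (0, 1) (0, 1)) ((hw.continuousOn_D_apply (0, 1)).mono hs)
    (hw.continuousOn_H_apply (0, 1) (0, 1))
    (fun x s h => hw.hasDerivAt_time_D x h (0, 1))
    (fun x s h hx => hw.D_time_eq_zero hf hg (p := (x, s)) (le_of_lt h) hx) ξ ht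
  refine h.congr_deriv ?_
  have hint : ∀ {a : EuclideanSpace ℝ (Fin n) → ℝ}, Continuous a →
      (∀ x, R + 3 * t < ‖x‖ → a x = 0) →
      Integrable fun x => fourierKer ξ x * (a x : ℂ) := by
    intro a ha ha0
    refine ((continuous_fourierKer ξ).mul
      (Complex.continuous_ofReal.comp ha)).integrable_of_hasCompactSupport
      (HasCompactSupport.intro
        (isCompact_closedBall (0 : EuclideanSpace ℝ (Fin n)) (R + 3 * t)) fun x hx => ?_)
    rw [mem_closedBall_zero_iff, not_le] at hx
    simp [ha0 x hx]
  have hH : ∀ v : EuclideanSpace ℝ (Fin n) × ℝ,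
      Integrable fun x => fourierKer ξ x * (H (x, t) v v : ℂ) := fun v =>
    hint (((hw.continuous_H ht).clm_apply continuous_const).clm_apply continuous_const)
      fun x hx => by simp [hw.H_eq_zero_of_pos hf hg (p := (x, t)) ht hx]
  have hD : Integrable fun x => fourierKer ξ x * (D (x, t) (0, 1) : ℂ) :=
    hint ((hw.continuous_D ht.le).clm_apply continuous_const)
      fun x hx => by simp [hw.D_eq_zero_of_pos hf hg (p := (x, t)) ht hx]
  have e1 : 𝓕 (fun x => (H (x, t) (0, 1) (0, 1) : ℂ)) ξ
      = ∑ i, 𝓕 (fun x => (H (x, t) (EuclideanSpace.single i 1, 0)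
        (EuclideanSpace.single i 1, 0) : ℂ)) ξ - 𝓕 (fun x => (D (x, t) (0, 1) : ℂ)) ξ := by
    simp only [fourier_eq_integral_fourierKer]
    rw [← integral_finsetSum _ fun i _ => hH _,
      ← integral_sub (integrable_finsetSum _ fun i _ => hH _) hD]
    congr 1; ext x
    have := hw.pde (x, t) ht
    have h2 : H (x, t) (0, 1) (0, 1) = ∑ i, H (x, t) (EuclideanSpace.single i 1, 0)
        (EuclideanSpace.single i 1, 0) - D (x, t) (0, 1) := by linarith
    rw [h2]
    push_cast
    rw [mul_sub, Finset.mul_sum]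
  rw [e1]
  congr 1
  simp only [hw.fourier_space_deriv_deriv hf hg ht, hw.fourier_space_deriv hf hg ht]
  have e2 : ∀ i : Fin n, inner ℝ (EuclideanSpace.single i (1 : ℝ)) ξ = ξ i := fun i => by
    simp [EuclideanSpace.inner_single_left]
  simp only [e2]
  rw [EuclideanSpace.real_norm_sq_eq]
  push_cast
  rw [Finset.mul_sum, ← Finset.sum_neg_distrib, Finset.sum_mul]
  refine Finset.sum_congr rfl fun i _ => ?_
  linear_combination (4 * π ^ 2 * (ξ i) ^ 2 * 𝓕 (fun x => (U (x, t) : ℂ)) ξ) * Complex.I_sq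

end IsDampedWave
end

/-- The positive square root `λ` in the characteristic roots `-1/2 ± λ` of `r² + r + k`. -/
def charRoot (k : ℝ) : ℝ := √(1 / 4 - k)

theorem charRoot_sq {k : ℝ} (hk : k ≤ 3 / 16) : charRoot k ^ 2 = 1 / 4 - k :=
  Real.sq_sqrt (by linarith)

theorem charRoot_ge {k : ℝ} (hk : k ≤ 3 / 16) : 1 / 4 ≤ charRoot k :=
  Real.le_sqrt_of_sq_le (by linarith)

theorem charRoot_le {k : ℝ} (hk : 0 ≤ k) : charRoot k ≤ 1 / 2 :=
  (Real.sqrt_le_left (by norm_num)).2 (by linarith)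

theorem le_half_sub_charRoot {k : ℝ} (hk0 : 0 ≤ k) (hk : k ≤ 3 / 16) :
    k ≤ 1 / 2 - charRoot k := by
  nlinarith [charRoot_sq hk, charRoot_ge hk, charRoot_le hk0]

theorem half_sub_charRoot_le {k : ℝ} (hk0 : 0 ≤ k) (hk : k ≤ 3 / 16) :
    1 / 2 - charRoot k ≤ 4 / 3 * k := by
  nlinarith [charRoot_sq hk, charRoot_ge hk, charRoot_le hk0]

theorem inv_two_charRoot_sub_one_le {k : ℝ} (hk0 : 0 ≤ k) (hk : k ≤ 3 / 16) :
    |1 / (2 * charRoot k) - 1| ≤ 6 * k := by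
  have h1 := charRoot_ge hk
  have h2 := charRoot_le hk0
  have h3 := half_sub_charRoot_le hk0 hk
  have h4 : 0 < 2 * charRoot k := by linarith
  rw [abs_of_nonneg (by rw [sub_nonneg, le_div_iff₀ h4]; linarith), sub_le_iff_le_add,
    div_le_iff₀ h4]
  nlinarith

theorem eq_of_hasDerivAt_zero {w : ℝ → ℂ} (hd : ∀ t > 0, HasDerivAt w 0 t)
    (hc : ContinuousWithinAt w (Ici 0) 0) {t : ℝ} (ht : 0 < t) : w t = w 0 := by
  have h1 : Tendsto w (𝓝[>] 0) (𝓝 (w 0)) := hc.mono Ioi_subset_Ici_self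
  have h2 : Tendsto w (𝓝[>] 0) (𝓝 (w t)) := by
    refine tendsto_const_nhds.congr' ?_
    filter_upwards [self_mem_nhdsWithin] with s hs
    exact isOpen_Ioi.is_const_of_deriv_eq_zero isPreconnected_Ioi
      (fun r hr => (hd r hr).differentiableAt.differentiableWithinAt)
      (fun r hr => (hd r hr).deriv) ht hs
  exact tendsto_nhds_unique h2 h1

theorem exp_mul_first_order {w : ℝ → ℂ} {c : ℝ} (hd : ∀ t > 0, HasDerivAt w (-(c : ℂ) * w t) t)
    (hc : ContinuousWithinAt w (Ici 0) 0) {t : ℝ} (ht : 0 < t) :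
    w t = (exp (-(c * t)) : ℝ) * w 0 := by
  have he : ∀ s : ℝ, HasDerivAt (fun s : ℝ => ((exp (c * s) : ℝ) : ℂ))
      ((exp (c * s) * c : ℝ) : ℂ) s := fun s => by
    have := ((hasDerivAt_id s).const_mul c).exp.ofReal_comp
    simpa using this
  have h := eq_of_hasDerivAt_zero (w := fun s => ((exp (c * s) : ℝ) : ℂ) * w s)
    (fun s hs => ((he s).mul (hd s hs)).congr_deriv (by push_cast; ring))
    ((he 0).continuousAt.continuousWithinAt.mul hc) ht
  simp only [mul_zero, Real.exp_zero, Complex.ofReal_one, one_mul] at h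
  rw [← h, ← mul_assoc, ← Complex.ofReal_mul, ← Real.exp_add]
  simp

/-- Explicit solution of the damped oscillator equation for `k ≤ 3/16`. -/
theorem damped_oscillator_low {y z : ℝ → ℂ} {k : ℝ} (hk : k ≤ 3 / 16)
    (hy : ∀ t > 0, HasDerivAt y (z t) t) (hz : ∀ t > 0, HasDerivAt z (-(k : ℂ) * y t - z t) t)
    (hyc : ContinuousWithinAt y (Ici 0) 0) (hzc : ContinuousWithinAt z (Ici 0) 0)
    {t : ℝ} (ht : 0 < t) :
    y t = (exp (-((1 / 2 - charRoot k) * t)) : ℝ) *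
        (((1 / 2 + 1 / 2 * (1 / (2 * charRoot k)) : ℝ) : ℂ) * y 0
          + ((1 / (2 * charRoot k) : ℝ) : ℂ) * z 0)
      - (exp (-((1 / 2 + charRoot k) * t)) : ℝ) *
        (((1 / 2 * (1 / (2 * charRoot k)) - 1 / 2 : ℝ) : ℂ) * y 0
          + ((1 / (2 * charRoot k) : ℝ) : ℂ) * z 0) := by
  set l := charRoot k with hl
  have hlsq : l ^ 2 = 1 / 4 - k := charRoot_sq hk
  have hl4 : 1 / 4 ≤ l := charRoot_ge hk
  have hlsqC : (l : ℂ) ^ 2 = 1 / 4 - k := by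
    rw [← Complex.ofReal_pow, hlsq]; push_cast; rfl
  have hl0 : (l : ℂ) ≠ 0 := by
    have : l ≠ 0 := by linarith
    exact_mod_cast this
  have h1 := exp_mul_first_order (w := fun s => z s + ((1 / 2 + l : ℝ) : ℂ) * y s)
    (c := 1 / 2 - l)
    (fun s hs => ((hz s hs).add ((hy s hs).const_mul _)).congr_deriv (by
      push_cast; linear_combination (-y s) * hlsqC))
    (hzc.add (continuousWithinAt_const.mul hyc)) ht
  have h2 := exp_mul_first_order (w := fun s => z s + ((1 / 2 - l : ℝ) : ℂ) * y s)
    (c := 1 / 2 + l)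
    (fun s hs => ((hz s hs).add ((hy s hs).const_mul _)).congr_deriv (by
      push_cast; linear_combination (-y s) * hlsqC))
    (hzc.add (continuousWithinAt_const.mul hyc)) ht
  have h3 : (2 * l : ℂ) * y t = (exp (-((1 / 2 - l) * t)) : ℝ) *
      (z 0 + ((1 / 2 + l : ℝ) : ℂ) * y 0) - (exp (-((1 / 2 + l) * t)) : ℝ) *
      (z 0 + ((1 / 2 - l : ℝ) : ℂ) * y 0) := by
    rw [← h1, ← h2]; push_cast; ring
  have h4 : y t = (2 * l : ℂ)⁻¹ * ((2 * l : ℂ) * y t) := by field_simp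
  rw [h4, h3]
  push_cast
  field_simp
  ring

theorem damped_oscillator_real_decay {y z : ℝ → ℝ} {k : ℝ} (hk : 3 / 16 ≤ k)
    (hy : ∀ t > 0, HasDerivAt y (z t) t) (hz : ∀ t > 0, HasDerivAt z (-k * y t - z t) t)
    (hyc : ContinuousWithinAt y (Ici 0) 0) (hzc : ContinuousWithinAt z (Ici 0) 0)
    {t : ℝ} (ht : 0 < t) :
    y t ^ 2 ≤ 12 * (z 0 ^ 2 + (1 + k) * y 0 ^ 2) * exp (-(t / 8)) := by
  set L : ℝ → ℝ := fun s => exp (s / 8) * (z s ^ 2 + k * y s ^ 2 + 1 / 4 * (y s * z s)) with hL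
  have hd : ∀ s > 0, HasDerivAt L (exp (s / 8) * (1 / 8) *
      (z s ^ 2 + k * y s ^ 2 + 1 / 4 * (y s * z s))
      + exp (s / 8) * (2 * z s * (-k * y s - z s) + k * (2 * y s * z s)
        + 1 / 4 * (z s * z s + y s * (-k * y s - z s)))) s := by
    intro s hs
    have h1 : HasDerivAt (fun s : ℝ => exp (s / 8)) (exp (s / 8) * (1 / 8)) s :=
      ((hasDerivAt_id s).div_const 8).exp
    have h2 := (((hz s hs).pow 2).add (((hy s hs).pow 2).const_mul k)).add
      (((hy s hs).mul (hz s hs)).const_mul (1 / 4))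
    refine (h1.mul h2).congr_deriv ?_
    simp
  have hcont : ContinuousOn L (Ici 0) := by
    intro s hs
    rcases (mem_Ici.1 hs).eq_or_lt with h | h
    · subst h
      exact (by fun_prop : Continuous fun s : ℝ => exp (s / 8)).continuousWithinAt.mul
        (((hzc.pow 2).add (continuousWithinAt_const.mul (hyc.pow 2))).add
          (continuousWithinAt_const.mul (hyc.mul hzc)))
    · exact (hd s h).continuousAt.continuousWithinAt
  have hanti : AntitoneOn L (Ici 0) := by
    refine antitoneOn_of_deriv_nonpos (convex_Ici 0) hcont ?_ ?_
    · intro s hs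
      rw [interior_Ici] at hs
      exact (hd s hs).differentiableAt.differentiableWithinAt
    · intro s hs
      rw [interior_Ici] at hs
      rw [(hd s hs).deriv]
      have : 1 / 8 * (z s ^ 2 + k * y s ^ 2 + 1 / 4 * (y s * z s)) +
        (2 * z s * (-k * y s - z s) + k * (2 * y s * z s)
        + 1 / 4 * (z s * z s + y s * (-k * y s - z s))) ≤ 0 := by
        nlinarith [sq_nonneg (z s + 1 / 14 * y s), sq_nonneg (y s), sq_nonneg (z s),
          mul_nonneg (sub_nonneg.2 hk) (sq_nonneg (y s))]
      nlinarith [exp_pos (s / 8)]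
  have h0 : L t ≤ L 0 := hanti self_mem_Ici ht.le ht.le
  have hL0 : L 0 ≤ 2 * (z 0 ^ 2 + (1 + k) * y 0 ^ 2) := by
    simp only [hL, zero_div, Real.exp_zero, one_mul]
    nlinarith [sq_nonneg (y 0 - z 0), sq_nonneg (y 0), sq_nonneg (z 0),
      mul_nonneg (sub_nonneg.2 hk) (sq_nonneg (y 0))]
  have hLt : exp (t / 8) * (1 / 6 * y t ^ 2) ≤ L t := by
    refine mul_le_mul_of_nonneg_left ?_ (exp_pos _).le
    nlinarith [sq_nonneg (z t + 1 / 8 * y t), mul_nonneg (sub_nonneg.2 hk) (sq_nonneg (y t)),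
      sq_nonneg (y t)]
  have he : exp (t / 8) * exp (-(t / 8)) = 1 := by rw [← Real.exp_add]; simp
  have hfin : exp (t / 8) * y t ^ 2 ≤ 12 * (z 0 ^ 2 + (1 + k) * y 0 ^ 2) := by linarith
  calc y t ^ 2 = (exp (t / 8) * y t ^ 2) * exp (-(t / 8)) := by
        rw [mul_right_comm, he, one_mul]
    _ ≤ _ := mul_le_mul_of_nonneg_right hfin (exp_pos _).le

theorem damped_oscillator_high {y z : ℝ → ℂ} {k : ℝ} (hk : 3 / 16 ≤ k)
    (hy : ∀ t > 0, HasDerivAt y (z t) t) (hz : ∀ t > 0, HasDerivAt z (-(k : ℂ) * y t - z t) t)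
    (hyc : ContinuousWithinAt y (Ici 0) 0) (hzc : ContinuousWithinAt z (Ici 0) 0)
    {t : ℝ} (ht : 0 < t) :
    ‖y t‖ ≤ 4 * ((1 + k) * ‖y 0‖ + ‖z 0‖) * exp (-(t / 16)) := by
  have hre := damped_oscillator_real_decay (y := fun s => (y s).re) (z := fun s => (z s).re) hk
    (fun s hs => (Complex.reCLM.hasFDerivAt.comp_hasDerivAt s (hy s hs)).congr_deriv (by simp))
    (fun s hs => (Complex.reCLM.hasFDerivAt.comp_hasDerivAt s (hz s hs)).congr_deriv (by simp))
    (Complex.continuous_re.continuousAt.comp_continuousWithinAt hyc)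
    (Complex.continuous_re.continuousAt.comp_continuousWithinAt hzc) ht
  have him := damped_oscillator_real_decay (y := fun s => (y s).im) (z := fun s => (z s).im) hk
    (fun s hs => (Complex.imCLM.hasFDerivAt.comp_hasDerivAt s (hy s hs)).congr_deriv (by simp))
    (fun s hs => (Complex.imCLM.hasFDerivAt.comp_hasDerivAt s (hz s hs)).congr_deriv (by simp))
    (Complex.continuous_im.continuousAt.comp_continuousWithinAt hyc)
    (Complex.continuous_im.continuousAt.comp_continuousWithinAt hzc) ht
  have e : ∀ c : ℂ, ‖c‖ ^ 2 = c.re ^ 2 + c.im ^ 2 := fun c => by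
    rw [Complex.sq_norm, Complex.normSq_apply]; ring
  have hsq : ‖y t‖ ^ 2 ≤ 12 * (‖z 0‖ ^ 2 + (1 + k) * ‖y 0‖ ^ 2) * exp (-(t / 8)) := by
    rw [e, e, e]; nlinarith
  have he : exp (-(t / 8)) = exp (-(t / 16)) ^ 2 := by
    rw [← Real.exp_nat_mul]; congr 1; push_cast; ring
  have hk0 : 0 ≤ k := by linarith
  refine (sq_le_sq₀ (norm_nonneg _) (by positivity)).1 ?_
  rw [mul_pow, ← he]
  refine hsq.trans (mul_le_mul_of_nonneg_right ?_ (exp_pos _).le)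
  have h1 := norm_nonneg (y 0)
  have h2 := norm_nonneg (z 0)
  have h3 : 0 ≤ (1 + k) * ‖y 0‖ * ‖z 0‖ := by positivity
  have h4 : (1 + k) * ‖y 0‖ ^ 2 ≤ ((1 + k) * ‖y 0‖) ^ 2 := by
    rw [mul_pow]; exact mul_le_mul_of_nonneg_right (by nlinarith) (sq_nonneg _)
  nlinarith [sq_nonneg (‖z 0‖), sq_nonneg ((1 + k) * ‖y 0‖)]

section
open scoped FourierTransform
open Complex (I)

theorem exists_schwartz_fourier {f : EuclideanSpace ℝ (Fin n) → ℝ}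
    (hf : ContDiff ℝ (⊤ : ℕ∞) f) (hfc : HasCompactSupport f) :
    ∃ F : SchwartzMap (EuclideanSpace ℝ (Fin n)) ℂ, ∀ ξ, F ξ = 𝓕 (fun x => (f x : ℂ)) ξ := by
  have h1 : HasCompactSupport fun x => (f x : ℂ) := hfc.comp_left Complex.ofReal_zero
  have h2 : ContDiff ℝ (⊤ : ℕ∞) fun x => (f x : ℂ) := Complex.ofRealCLM.contDiff.comp hf
  refine ⟨𝓕 (h1.toSchwartzMap h2), fun ξ => ?_⟩
  rw [SchwartzMap.fourier_coe]
  rfl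

theorem integrable_pow_mul_fourier {f : EuclideanSpace ℝ (Fin n) → ℝ}
    (hf : ContDiff ℝ (⊤ : ℕ∞) f) (hfc : HasCompactSupport f) (j : ℕ) :
    Integrable fun ξ : EuclideanSpace ℝ (Fin n) => ‖ξ‖ ^ j * ‖𝓕 (fun x => (f x : ℂ)) ξ‖ := by
  obtain ⟨F, hF⟩ := exists_schwartz_fourier hf hfc
  simpa [hF] using F.integrable_pow_mul volume j

/-- The sine transform of `v` centred at `x`. -/
def osc (v : EuclideanSpace ℝ (Fin n) → ℝ) (x ξ : EuclideanSpace ℝ (Fin n)) : ℝ :=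
  ∫ y, v y * sin (2 * π * inner ℝ (x - y) ξ)

theorem re_I_mul_exp_mul_fourier {v : EuclideanSpace ℝ (Fin n) → ℝ} (hv : Continuous v)
    (hvc : HasCompactSupport v) (x ξ : EuclideanSpace ℝ (Fin n)) :
    (I * Complex.exp (↑(2 * π * inner ℝ ξ x) * I) * 𝓕 (fun x => (v x : ℂ)) ξ).re
      = -osc v x ξ := by
  rw [fourier_eq_integral_fourierKer, ← integral_const_mul, osc, ← integral_neg]
  have hint : Integrable fun y => I * Complex.exp (↑(2 * π * inner ℝ ξ x) * I) *
      (fourierKer ξ y * (v y : ℂ)) :=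
    (((continuous_fourierKer ξ).mul (Complex.continuous_ofReal.comp
      hv)).integrable_of_hasCompactSupport
      (hvc.comp_left Complex.ofReal_zero).mul_left).const_mul _
  have := integral_re hint
  simp only [RCLike.re_eq_complex_re] at this
  rw [← this]
  congr 1; ext y
  have e : I * Complex.exp (↑(2 * π * inner ℝ ξ x) * I) * (fourierKer ξ y * (v y : ℂ))
      = (v y : ℂ) * (I * Complex.exp (↑(2 * π * inner ℝ (x - y) ξ) * I)) := by
    have : Complex.exp (↑(2 * π * inner ℝ ξ x) * I) * fourierKer ξ y
        = Complex.exp (↑(2 * π * inner ℝ (x - y) ξ) * I) := by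
      rw [fourierKer, ← Complex.exp_add, inner_sub_left, real_inner_comm]
      congr 1; push_cast; ring
    rw [← this]; ring
  rw [e, Complex.re_ofReal_mul, Complex.I_mul_re, Complex.exp_ofReal_mul_I_im]
  ring

theorem abs_sin_sub_self_le (θ : ℝ) : |sin θ - θ| ≤ 2 * |θ| ^ 3 := by
  rcases le_total |θ| 1 with h | h
  · have := Real.sin_bound h
    rw [abs_le] at this ⊢
    have h0 := abs_nonneg θ
    have h3 : |θ| ^ 4 ≤ |θ| ^ 3 := pow_le_pow_of_le_one h0 h (by norm_num)
    have h4 : |θ ^ 3| = |θ| ^ 3 := abs_pow θ 3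
    have h5 := le_abs_self (θ ^ 3)
    have h6 := neg_abs_le (θ ^ 3)
    constructor <;> nlinarith [pow_nonneg h0 3]
  · have h1 : |sin θ - θ| ≤ |sin θ| + |θ| := abs_sub _ _
    have h2 : |sin θ| ≤ |θ| := Real.abs_sin_le_abs
    have h3 : |θ| ^ 1 ≤ |θ| ^ 3 := pow_le_pow_right₀ h (by norm_num)
    linarith

theorem abs_two_pi_inner_le {R : ℝ} (hR : 0 ≤ R) {x y ξ : EuclideanSpace ℝ (Fin n)}
    (hy : ‖y‖ ≤ R) :
    |2 * π * inner ℝ (x - y) ξ| ≤ 2 * π * (1 + R) * (‖ξ‖ * (1 + ‖x‖)) := by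
  have h1 := abs_real_inner_le_norm (x - y) ξ
  have h2 : ‖x - y‖ ≤ (1 + R) * (1 + ‖x‖) := by
    nlinarith [norm_sub_le x y, norm_nonneg x, mul_nonneg hR (norm_nonneg x)]
  rw [abs_mul, abs_of_pos (by positivity : 0 < 2 * π)]
  calc 2 * π * |inner ℝ (x - y) ξ| ≤ 2 * π * (((1 + R) * (1 + ‖x‖)) * ‖ξ‖) := by
        gcongr; exact h1.trans (by gcongr)
    _ = _ := by ring

variable {v : EuclideanSpace ℝ (Fin n) → ℝ} {R : ℝ}

theorem abs_integral_mul_le (hv : Continuous v) (hvc : HasCompactSupport v)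
    (h0 : ∀ x, R < ‖x‖ → v x = 0) {k : EuclideanSpace ℝ (Fin n) → ℝ} {B : ℝ}
    (hk : ∀ y, ‖y‖ ≤ R → |k y| ≤ B) :
    |∫ y, v y * k y| ≤ (∫ y, |v y|) * B := by
  rw [← integral_mul_const]
  refine norm_integral_le_of_norm_le (f := fun y => v y * k y)
    ((hv.integrable_of_hasCompactSupport hvc).abs.mul_const B) (ae_of_all _ fun y => ?_)
  rw [Real.norm_eq_abs, abs_mul]
  rcases le_or_gt ‖y‖ R with h | h
  · exact mul_le_mul_of_nonneg_left (hk y h) (abs_nonneg _)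
  · simp [h0 y h]

theorem abs_osc_le (hR : 0 ≤ R) (hv : Continuous v) (hvc : HasCompactSupport v)
    (h0 : ∀ x, R < ‖x‖ → v x = 0) (x ξ : EuclideanSpace ℝ (Fin n)) :
    |osc v x ξ| ≤ (∫ y, |v y|) * (2 * π * (1 + R) * (‖ξ‖ * (1 + ‖x‖))) :=
  abs_integral_mul_le hv hvc h0 fun _ hy =>
    Real.abs_sin_le_abs.trans (abs_two_pi_inner_le hR hy)

theorem abs_osc_sub_le (hR : 0 ≤ R) (hv : Continuous v) (hvc : HasCompactSupport v)
    (h0 : ∀ x, R < ‖x‖ → v x = 0) (x ξ : EuclideanSpace ℝ (Fin n)) :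
    |osc v x ξ - 2 * π * inner ℝ ((∫ y, v y) • x - ∫ y, v y • y) ξ|
      ≤ (∫ y, |v y|) * (2 * (2 * π * (1 + R) * (‖ξ‖ * (1 + ‖x‖))) ^ 3) := by
  have hvi := hv.integrable_of_hasCompactSupport hvc (μ := volume)
  have hvy : Integrable fun y => v y • y :=
    (hv.smul continuous_id).integrable_of_hasCompactSupport hvc.smul_right
  have e : 2 * π * inner ℝ ((∫ y, v y) • x - ∫ y, v y • y) ξ
      = ∫ y, v y * (2 * π * inner ℝ (x - y) ξ) := by
    rw [← integral_smul_const, ← integral_sub (hvi.smul_const x) hvy, real_inner_comm,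
      ← integral_inner (f := fun y => v y • x - v y • y) ((hvi.smul_const x).sub hvy),
      ← integral_const_mul]
    congr 1; ext y
    rw [← smul_sub, inner_smul_right, real_inner_comm]; ring
  have i1 : Integrable fun y => v y * sin (2 * π * inner ℝ (x - y) ξ) :=
    Continuous.integrable_of_hasCompactSupport (by fun_prop) hvc.mul_right
  have i2 : Integrable fun y => v y * (2 * π * inner ℝ (x - y) ξ) :=
    Continuous.integrable_of_hasCompactSupport (by fun_prop) hvc.mul_right
  rw [e, osc, ← integral_sub i1 i2]
  simp only [← mul_sub]
  refine abs_integral_mul_le hv hvc h0 fun y hy => (abs_sin_sub_self_le _).trans ?_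
  gcongr
  exact abs_two_pi_inner_le hR hy

end

theorem integrable_norm_pow_four_mul_gaussian :
    Integrable fun ξ : EuclideanSpace ℝ (Fin n) => ‖ξ‖ ^ 4 * exp (-(4 * π ^ 2 * ‖ξ‖ ^ 2)) := by
  have h : Integrable fun ξ : EuclideanSpace ℝ (Fin n) => exp (-‖ξ‖ ^ 2) := by
    have := (GaussianFourier.integrable_cexp_neg_mul_sq_norm_add
      (V := EuclideanSpace ℝ (Fin n)) (b := 1) (by simp) 0 0).norm
    refine this.congr (ae_of_all _ fun ξ => ?_)
    simp only [Complex.norm_exp]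
    norm_num [← Complex.ofReal_pow]
  refine (h.const_mul 2).mono' (by fun_prop) (ae_of_all _ fun ξ => ?_)
  rw [Real.norm_of_nonneg (by positivity)]
  have h1 : ‖ξ‖ ^ 4 ≤ 2 * exp (‖ξ‖ ^ 2) := by
    have := Real.pow_div_factorial_le_exp (‖ξ‖ ^ 2) (by positivity) 2
    norm_num [← pow_mul] at this
    linarith
  calc ‖ξ‖ ^ 4 * exp (-(4 * π ^ 2 * ‖ξ‖ ^ 2))
      ≤ 2 * exp (‖ξ‖ ^ 2) * exp (-(2 * ‖ξ‖ ^ 2)) := by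
        gcongr
        nlinarith [Real.pi_gt_three]
    _ = 2 * exp (-‖ξ‖ ^ 2) := by
        rw [mul_assoc, ← Real.exp_add]; ring_nf

theorem norm_pow_four_mul_gaussian_comp_smul {t : ℝ} (ht : 0 < t)
    (ξ : EuclideanSpace ℝ (Fin n)) :
    ‖ξ‖ ^ 4 * exp (-(4 * π ^ 2 * ‖ξ‖ ^ 2 * t))
      = (√t ^ 4)⁻¹ * (‖√t • ξ‖ ^ 4 * exp (-(4 * π ^ 2 * ‖√t • ξ‖ ^ 2))) := by
  have h : 0 < √t := Real.sqrt_pos.2 ht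
  rw [norm_smul, Real.norm_of_nonneg h.le, mul_pow, mul_pow, Real.sq_sqrt ht.le,
    ← mul_assoc (√t ^ 4)⁻¹, inv_mul_cancel_left₀ (by positivity)]
  ring_nf

theorem integrable_norm_pow_four_mul_heat {t : ℝ} (ht : 0 < t) :
    Integrable fun ξ : EuclideanSpace ℝ (Fin n) =>
      ‖ξ‖ ^ 4 * exp (-(4 * π ^ 2 * ‖ξ‖ ^ 2 * t)) := by
  simp only [norm_pow_four_mul_gaussian_comp_smul ht]
  exact (integrable_norm_pow_four_mul_gaussian.comp_smul (Real.sqrt_pos.2 ht).ne').const_mul _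

theorem integral_norm_pow_four_mul_heat {t : ℝ} (ht : 0 < t) :
    √t ^ (n + 4) * ∫ ξ : EuclideanSpace ℝ (Fin n), ‖ξ‖ ^ 4 * exp (-(4 * π ^ 2 * ‖ξ‖ ^ 2 * t))
      = ∫ ξ : EuclideanSpace ℝ (Fin n), ‖ξ‖ ^ 4 * exp (-(4 * π ^ 2 * ‖ξ‖ ^ 2)) := by
  have h : 0 < √t := Real.sqrt_pos.2 ht
  simp only [norm_pow_four_mul_gaussian_comp_smul ht]
  rw [integral_const_mul, Measure.integral_comp_smul volume
    (fun ξ : EuclideanSpace ℝ (Fin n) => ‖ξ‖ ^ 4 * exp (-(4 * π ^ 2 * ‖ξ‖ ^ 2)))]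
  rw [abs_of_pos (by positivity), finrank_euclideanSpace_fin, smul_eq_mul,
    pow_add, ← mul_assoc, ← mul_assoc]
  rw [show √t ^ n * √t ^ 4 * (√t ^ 4)⁻¹ * (√t ^ n)⁻¹ = 1 by field_simp, one_mul]

/-- The frequencies on which the characteristic roots of the damped oscillator are real and
separated. -/
def lowFreq (n : ℕ) : Set (EuclideanSpace ℝ (Fin n)) := {ξ | 4 * π ^ 2 * ‖ξ‖ ^ 2 ≤ 3 / 16}

/-- The slow decay rate at frequency `ξ`. -/
def decayRate (ξ : EuclideanSpace ℝ (Fin n)) : ℝ := 1 / 2 - charRoot (4 * π ^ 2 * ‖ξ‖ ^ 2)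

theorem continuous_decayRate : Continuous (decayRate (n := n)) := by
  unfold decayRate charRoot; fun_prop

theorem isCompact_lowFreq : IsCompact (lowFreq n) := by
  refine (isCompact_closedBall (0 : EuclideanSpace ℝ (Fin n)) 1).of_isClosed_subset
    (isClosed_le (by fun_prop) continuous_const) fun ξ hξ => ?_
  rw [mem_closedBall_zero_iff]
  have : 4 * π ^ 2 * ‖ξ‖ ^ 2 ≤ 3 / 16 := hξ
  have hpi := Real.pi_gt_three
  by_contra! h
  have h1 : 1 < ‖ξ‖ ^ 2 := one_lt_pow₀ h two_ne_zero
  have h2 : 9 < π ^ 2 := by nlinarith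
  nlinarith

theorem inner_sq_integral_lower (hn : 1 ≤ n) : ∃ c > (0 : ℝ), ∀ w : EuclideanSpace ℝ (Fin n),
    ∀ t ≥ (1 : ℝ), c * ‖w‖ ^ 2 ≤ √t ^ (n + 2) *
      ∫ ξ in lowFreq n, exp (-(decayRate ξ * t)) * inner ℝ w ξ ^ 2 := by
  have : Nonempty (Fin n) := ⟨⟨0, hn⟩⟩
  set V : ℝ := volume.real (ball (0 : EuclideanSpace ℝ (Fin n)) 1) with hV
  have hVpos : 0 < V := ENNReal.toReal_pos (measure_ball_pos _ _ one_pos).ne'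
    measure_ball_lt_top.ne
  refine ⟨exp (-1) * (1 / 64) ^ 2 * ((1 / 64) ^ n * V), by positivity, fun w t ht => ?_⟩
  rcases eq_or_ne w 0 with hw | hw
  · subst hw; simp
  have hwpos : 0 < ‖w‖ := norm_pos_iff.2 hw
  have hs : 0 < √t := Real.sqrt_pos.2 (by linarith)
  set r : ℝ := 1 / 16 / √t with hr
  have hrpos : 0 < r := by positivity
  set e : EuclideanSpace ℝ (Fin n) := (r / 2 / ‖w‖) • w with he
  have hnorme : ‖e‖ = r / 2 := by
    rw [he, norm_smul, Real.norm_of_nonneg (by positivity)]; field_simp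
  have hr2 : r ^ 2 * t = (1 / 16) ^ 2 := by
    rw [hr, div_pow, Real.sq_sqrt (by linarith)]; field_simp
  have hpi : π ^ 2 ≤ 10 := by nlinarith [Real.pi_lt_d2, Real.pi_pos]
  have hball : ∀ ξ ∈ ball e (r / 4), 4 * π ^ 2 * ‖ξ‖ ^ 2 * t ≤ 3 / 16 ∧
      r / 4 * ‖w‖ ≤ inner ℝ w ξ := by
    intro ξ hξ
    rw [mem_ball, dist_eq_norm] at hξ
    constructor
    · have h1 : ‖ξ‖ ≤ r := by
        have := norm_le_norm_add_norm_sub' ξ e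
        linarith
      calc 4 * π ^ 2 * ‖ξ‖ ^ 2 * t ≤ 4 * 10 * r ^ 2 * t := by gcongr
        _ = 4 * 10 * (r ^ 2 * t) := by ring
        _ ≤ 3 / 16 := by rw [hr2]; norm_num
    · have h1 : inner ℝ w e = r / 2 * ‖w‖ := by
        rw [he, inner_smul_right, real_inner_self_eq_norm_sq]; field_simp
      have h2 := abs_real_inner_le_norm w (ξ - e)
      have h3 : inner ℝ w ξ = inner ℝ w e + inner ℝ w (ξ - e) := by
        rw [← inner_add_right]; simp
      have h4 : ‖w‖ * ‖ξ - e‖ ≤ ‖w‖ * (r / 4) := by gcongr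
      rw [abs_le] at h2
      linarith
  have hsub : ball e (r / 4) ⊆ lowFreq n := fun ξ hξ => by
    have h1 := (hball ξ hξ).1
    have h2 : 0 ≤ 4 * π ^ 2 * ‖ξ‖ ^ 2 := by positivity
    show 4 * π ^ 2 * ‖ξ‖ ^ 2 ≤ 3 / 16
    nlinarith
  have hcont : Continuous fun ξ : EuclideanSpace ℝ (Fin n) =>
      exp (-(decayRate ξ * t)) * inner ℝ w ξ ^ 2 := by
    have := continuous_decayRate (n := n)
    fun_prop
  have hint : IntegrableOn (fun ξ : EuclideanSpace ℝ (Fin n) =>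
      exp (-(decayRate ξ * t)) * inner ℝ w ξ ^ 2) (lowFreq n) :=
    hcont.continuousOn.integrableOn_compact isCompact_lowFreq
  have hlow : exp (-1) * (r / 4 * ‖w‖) ^ 2 * volume.real (ball e (r / 4)) ≤
      ∫ ξ in ball e (r / 4), exp (-(decayRate ξ * t)) * inner ℝ w ξ ^ 2 := by
    refine setIntegral_ge_of_const_le_real measurableSet_ball measure_ball_lt_top.ne ?_
      (hint.mono_set hsub)
    intro ξ hξ
    obtain ⟨h1, h2⟩ := hball ξ hξ
    have h3 : decayRate ξ * t ≤ 1 := by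
      have := half_sub_charRoot_le (k := 4 * π ^ 2 * ‖ξ‖ ^ 2) (by positivity) (hsub hξ)
      have : decayRate ξ * t ≤ 4 / 3 * (4 * π ^ 2 * ‖ξ‖ ^ 2) * t := by
        gcongr
        exact this
      linarith
    gcongr
  have hvol : volume.real (ball e (r / 4)) = (r / 4) ^ n * V := by
    rw [measureReal_def, Measure.addHaar_ball volume e (by positivity), ENNReal.toReal_mul,
      ENNReal.toReal_ofReal (by positivity), finrank_euclideanSpace_fin]
    rfl
  have hmono : ∫ ξ in ball e (r / 4), exp (-(decayRate ξ * t)) * inner ℝ w ξ ^ 2 ≤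
      ∫ ξ in lowFreq n, exp (-(decayRate ξ * t)) * inner ℝ w ξ ^ 2 :=
    setIntegral_mono_set hint (ae_of_all _ fun ξ => by positivity) hsub.eventuallyLE
  calc exp (-1) * (1 / 64) ^ 2 * ((1 / 64) ^ n * V) * ‖w‖ ^ 2
      = √t ^ (n + 2) * (exp (-1) * (r / 4 * ‖w‖) ^ 2 * volume.real (ball e (r / 4))) := by
        have h64 : r / 4 = 1 / 64 * (√t)⁻¹ := by rw [hr]; ring
        have h1 : √t ^ (n + 2) * ((√t)⁻¹ ^ n * (√t)⁻¹ ^ 2) = 1 := by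
          rw [← pow_add, ← mul_pow, mul_inv_cancel₀ hs.ne', one_pow]
        rw [hvol, h64, mul_pow _ _ n, mul_pow, mul_pow]
        linear_combination
          -(exp (-1) * (1 / 64) ^ 2 * ((1 / 64) ^ n * V) * ‖w‖ ^ 2) * h1
    _ ≤ _ := by gcongr; exact hlow.trans hmono

section
open scoped FourierTransform
open Complex (I)

/-- Bound on the exponentially decaying part of the Fourier transform of the solution. -/
def fastPart (f g : EuclideanSpace ℝ (Fin n) → ℝ) (ξ : EuclideanSpace ℝ (Fin n)) : ℝ :=
  4 * ((1 + 4 * π ^ 2 * ‖ξ‖ ^ 2) * ‖𝓕 (fun x => (f x : ℂ)) ξ‖ + ‖𝓕 (fun x => (g x : ℂ)) ξ‖)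

theorem fastPart_nonneg (f g : EuclideanSpace ℝ (Fin n) → ℝ) (ξ : EuclideanSpace ℝ (Fin n)) :
    0 ≤ fastPart f g ξ := by unfold fastPart; positivity

theorem integrable_norm_mul_fastPart {f g : EuclideanSpace ℝ (Fin n) → ℝ}
    (hfs : ContDiff ℝ (⊤ : ℕ∞) f) (hgs : ContDiff ℝ (⊤ : ℕ∞) g) (hfc : HasCompactSupport f)
    (hgc : HasCompactSupport g) :
    Integrable fun ξ : EuclideanSpace ℝ (Fin n) => ‖ξ‖ * fastPart f g ξ := by
  have h := (((integrable_pow_mul_fourier hfs hfc 1).const_mul 4).add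
    ((integrable_pow_mul_fourier hfs hfc 3).const_mul (16 * π ^ 2))).add
    ((integrable_pow_mul_fourier hgs hgc 1).const_mul 4)
  refine h.congr (ae_of_all _ fun ξ => ?_)
  simp only [fastPart, Pi.add_apply]
  ring

namespace IsDampedWave

variable {U : EuclideanSpace ℝ (Fin n) × ℝ → ℝ}
  {D : EuclideanSpace ℝ (Fin n) × ℝ → (EuclideanSpace ℝ (Fin n) × ℝ →L[ℝ] ℝ)}
  {H : EuclideanSpace ℝ (Fin n) × ℝ → (EuclideanSpace ℝ (Fin n) × ℝ →L[ℝ]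
    EuclideanSpace ℝ (Fin n) × ℝ →L[ℝ] ℝ)} {f g : EuclideanSpace ℝ (Fin n) → ℝ} {R : ℝ}

theorem continuousWithinAt_fourier (hw : IsDampedWave U D H f g)
    (hf : ∀ x, R < ‖x‖ → f x = 0) (hg : ∀ x, R < ‖x‖ → g x = 0)
    (ξ : EuclideanSpace ℝ (Fin n)) :
    ContinuousWithinAt (fun s => 𝓕 (fun x => (U (x, s) : ℂ)) ξ) (Ici 0) 0 :=
  continuousOn_fourier_param (R := R) (G := fun x s => U (x, s)) hw.contU
    (fun x s hs hx => hw.U_eq_zero hf hg (p := (x, s)) hs hx) ξ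

theorem continuousWithinAt_fourier_time (hw : IsDampedWave U D H f g)
    (hf : ∀ x, R < ‖x‖ → f x = 0) (hg : ∀ x, R < ‖x‖ → g x = 0)
    (ξ : EuclideanSpace ℝ (Fin n)) :
    ContinuousWithinAt (fun s => 𝓕 (fun x => (D (x, s) (0, 1) : ℂ)) ξ) (Ici 0) 0 :=
  continuousOn_fourier_param (R := R) (G := fun x s => D (x, s) (0, 1))
    (hw.continuousOn_D_apply (0, 1))
    (fun x s hs hx => hw.D_time_eq_zero hf hg (p := (x, s)) hs hx) ξ

theorem norm_fourier_sub_le (hw : IsDampedWave U D H f g) (hf : ∀ x, R < ‖x‖ → f x = 0)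
    (hg : ∀ x, R < ‖x‖ → g x = 0) {t : ℝ} (ht : 0 < t) {ξ : EuclideanSpace ℝ (Fin n)}
    (hξ : ξ ∈ lowFreq n) :
    ‖𝓕 (fun x => (U (x, t) : ℂ)) ξ - (exp (-(decayRate ξ * t)) : ℝ) *
        (((1 / 2 + 1 / 2 * (1 / (2 * charRoot (4 * π ^ 2 * ‖ξ‖ ^ 2))) : ℝ) : ℂ) *
            𝓕 (fun x => (f x : ℂ)) ξ
          + ((1 / (2 * charRoot (4 * π ^ 2 * ‖ξ‖ ^ 2)) : ℝ) : ℂ) * 𝓕 (fun x => (g x : ℂ)) ξ)‖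
      ≤ fastPart f g ξ * exp (-(t / 16)) := by
  have h := damped_oscillator_low hξ
    (fun t ht => hw.hasDerivAt_fourier hf hg ht ξ)
    (fun t ht => hw.hasDerivAt_fourier_deriv hf hg ht ξ)
    (hw.continuousWithinAt_fourier hf hg ξ) (hw.continuousWithinAt_fourier_time hf hg ξ) ht
  simp only [hw.init, hw.init_time] at h
  rw [h, decayRate, sub_sub_cancel_left, norm_neg, norm_mul, Complex.norm_real,
    Real.norm_of_nonneg (exp_pos _).le, mul_comm]
  have hk0 : 0 ≤ 4 * π ^ 2 * ‖ξ‖ ^ 2 := by positivity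
  have hl := charRoot_ge hξ
  have hl2 := charRoot_le hk0
  have ha : 1 / (2 * charRoot (4 * π ^ 2 * ‖ξ‖ ^ 2)) ≤ 2 := by
    rw [div_le_iff₀ (by linarith)]; linarith
  have ha1 : 1 ≤ 1 / (2 * charRoot (4 * π ^ 2 * ‖ξ‖ ^ 2)) := by
    rw [le_div_iff₀ (by linarith)]; linarith
  refine mul_le_mul ?_ ?_ (exp_pos _).le (fastPart_nonneg f g ξ)
  · refine (norm_add_le _ _).trans ?_
    rw [norm_mul, norm_mul, Complex.norm_real, Complex.norm_real,
      Real.norm_of_nonneg (by linarith), Real.norm_of_nonneg (by linarith), fastPart]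
    nlinarith [norm_nonneg (𝓕 (fun x => (f x : ℂ)) ξ), norm_nonneg (𝓕 (fun x => (g x : ℂ)) ξ),
      mul_nonneg hk0 (norm_nonneg (𝓕 (fun x => (f x : ℂ)) ξ))]
  · gcongr
    nlinarith

theorem norm_fourier_le_of_high (hw : IsDampedWave U D H f g) (hf : ∀ x, R < ‖x‖ → f x = 0)
    (hg : ∀ x, R < ‖x‖ → g x = 0) {t : ℝ} (ht : 0 < t) {ξ : EuclideanSpace ℝ (Fin n)}
    (hξ : ξ ∉ lowFreq n) :
    ‖𝓕 (fun x => (U (x, t) : ℂ)) ξ‖ ≤ fastPart f g ξ * exp (-(t / 16)) := by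
  have h := damped_oscillator_high (le_of_lt (not_le.1 hξ))
    (fun t ht => hw.hasDerivAt_fourier hf hg ht ξ)
    (fun t ht => hw.hasDerivAt_fourier_deriv hf hg ht ξ)
    (hw.continuousWithinAt_fourier hf hg ξ) (hw.continuousWithinAt_fourier_time hf hg ξ) ht
  simp only [hw.init, hw.init_time] at h
  exact h

end IsDampedWave

theorem abs_osc_combination_le {f g : EuclideanSpace ℝ (Fin n) → ℝ} {R : ℝ} (hR : 0 ≤ R)
    (hfs : Continuous f) (hgs : Continuous g) (hfc : HasCompactSupport f)
    (hgc : HasCompactSupport g) (hf : ∀ x, R < ‖x‖ → f x = 0) (hg : ∀ x, R < ‖x‖ → g x = 0)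
    {x w ξ : EuclideanSpace ℝ (Fin n)} {M : ℝ}
    (hM : ((∫ y, f y) • x - ∫ y, f y • y) + ((∫ y, g y) • x - ∫ y, g y • y) = M • w)
    (hξ : ξ ∈ lowFreq n) :
    |((1 / 2 + 1 / 2 * (1 / (2 * charRoot (4 * π ^ 2 * ‖ξ‖ ^ 2)))) * osc f x ξ
        + (1 / (2 * charRoot (4 * π ^ 2 * ‖ξ‖ ^ 2))) * osc g x ξ)
        - 2 * π * M * inner ℝ w ξ|
      ≤ ((∫ y, |f y|) + ∫ y, |g y|) *
        (24 * π ^ 2 * (2 * π * (1 + R)) + 2 * (2 * π * (1 + R)) ^ 3) *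
        ((1 + ‖x‖) ^ 3 * ‖ξ‖ ^ 3) := by
  have h1 := abs_osc_le hR hfs hfc hf x ξ
  have h2 := abs_osc_le hR hgs hgc hg x ξ
  have h3 := abs_osc_sub_le hR hfs hfc hf x ξ
  have h4 := abs_osc_sub_le hR hgs hgc hg x ξ
  have h5 := inv_two_charRoot_sub_one_le (k := 4 * π ^ 2 * ‖ξ‖ ^ 2) (by positivity) hξ
  have hlin : 2 * π * M * inner ℝ w ξ
      = 2 * π * inner ℝ ((∫ y, f y) • x - ∫ y, f y • y) ξ
        + 2 * π * inner ℝ ((∫ y, g y) • x - ∫ y, g y • y) ξ := by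
    rw [← mul_add, ← inner_add_left, hM, real_inner_smul_left, mul_assoc]
  rw [hlin]
  set a : ℝ := 1 / (2 * charRoot (4 * π ^ 2 * ‖ξ‖ ^ 2))
  set A : ℝ := 2 * π * (1 + R) with hA
  have hA0 : 0 ≤ A := by positivity
  set p : ℝ := 2 * π * inner ℝ ((∫ y, f y) • x - ∫ y, f y • y) ξ
  set q : ℝ := 2 * π * inner ℝ ((∫ y, g y) • x - ∫ y, g y • y) ξ
  set F : ℝ := ∫ y, |f y|
  set G : ℝ := ∫ y, |g y|
  have hF : 0 ≤ F := integral_nonneg fun _ => abs_nonneg _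
  have hG : 0 ≤ G := integral_nonneg fun _ => abs_nonneg _
  have hX : ‖ξ‖ ^ 2 * (‖ξ‖ * (1 + ‖x‖)) ≤ (1 + ‖x‖) ^ 3 * ‖ξ‖ ^ 3 := by
    have : (1 + ‖x‖) ^ 1 ≤ (1 + ‖x‖) ^ 3 :=
      pow_le_pow_right₀ (by linarith [norm_nonneg x]) (by norm_num)
    calc ‖ξ‖ ^ 2 * (‖ξ‖ * (1 + ‖x‖)) = (1 + ‖x‖) ^ 1 * ‖ξ‖ ^ 3 := by ring
      _ ≤ _ := by gcongr
  have key : ∀ {b F o : ℝ}, 0 ≤ F → |b| ≤ 6 * (4 * π ^ 2 * ‖ξ‖ ^ 2) →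
      |o| ≤ F * (A * (‖ξ‖ * (1 + ‖x‖))) →
      |b * o| ≤ F * (24 * π ^ 2 * A) * ((1 + ‖x‖) ^ 3 * ‖ξ‖ ^ 3) := by
    intro b F o hF hb ho
    rw [abs_mul]
    calc |b| * |o| ≤ 6 * (4 * π ^ 2 * ‖ξ‖ ^ 2) * (F * (A * (‖ξ‖ * (1 + ‖x‖)))) := by gcongr
      _ = F * (24 * π ^ 2 * A) * (‖ξ‖ ^ 2 * (‖ξ‖ * (1 + ‖x‖))) := by ring
      _ ≤ _ := by gcongr
  have k1 := key hF (b := 1 / 2 * (a - 1)) (by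
    rw [abs_mul, abs_of_pos (by norm_num : (0 : ℝ) < 1 / 2)]; linarith [abs_nonneg (a - 1)]) h1
  have k2 := key hG h5 h2
  have e : (1 / 2 + 1 / 2 * a) * osc f x ξ + a * osc g x ξ - (p + q)
      = (1 / 2 * (a - 1) * osc f x ξ + (a - 1) * osc g x ξ)
        + ((osc f x ξ - p) + (osc g x ξ - q)) := by ring
  rw [e]
  refine (abs_add_le _ _).trans ?_
  have t1 := abs_add_le (1 / 2 * (a - 1) * osc f x ξ) ((a - 1) * osc g x ξ)
  have t2 := abs_add_le (osc f x ξ - p) (osc g x ξ - q)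
  linear_combination t1 + t2 + k1 + k2 + h3 + h4

namespace IsDampedWave

variable {U : EuclideanSpace ℝ (Fin n) × ℝ → ℝ}
  {D : EuclideanSpace ℝ (Fin n) × ℝ → (EuclideanSpace ℝ (Fin n) × ℝ →L[ℝ] ℝ)}
  {H : EuclideanSpace ℝ (Fin n) × ℝ → (EuclideanSpace ℝ (Fin n) × ℝ →L[ℝ]
    EuclideanSpace ℝ (Fin n) × ℝ →L[ℝ] ℝ)} {f g : EuclideanSpace ℝ (Fin n) → ℝ} {R : ℝ}

/-- Leading-order behaviour of the integrand of the Fourier representation of the gradient. -/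
theorem abs_re_fourier_add_le (hw : IsDampedWave U D H f g) (hR : 0 ≤ R)
    (hfs : Continuous f) (hgs : Continuous g) (hfc : HasCompactSupport f)
    (hgc : HasCompactSupport g) (hf : ∀ x, R < ‖x‖ → f x = 0) (hg : ∀ x, R < ‖x‖ → g x = 0)
    {x w : EuclideanSpace ℝ (Fin n)} {M : ℝ}
    (hM : ((∫ y, f y) • x - ∫ y, f y • y) + ((∫ y, g y) • x - ∫ y, g y • y) = M • w)
    {t : ℝ} (ht : 0 < t) (ξ : EuclideanSpace ℝ (Fin n)) :
    |(I * Complex.exp (↑(2 * π * inner ℝ ξ x) * I) * 𝓕 (fun x => (U (x, t) : ℂ)) ξ).re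
        + (lowFreq n).indicator (fun ξ => exp (-(decayRate ξ * t)) *
          (2 * π * M * inner ℝ w ξ)) ξ|
      ≤ ((∫ y, |f y|) + ∫ y, |g y|) *
        (24 * π ^ 2 * (2 * π * (1 + R)) + 2 * (2 * π * (1 + R)) ^ 3) * (1 + ‖x‖) ^ 3 *
        (‖ξ‖ ^ 3 * exp (-(4 * π ^ 2 * ‖ξ‖ ^ 2 * t))) + fastPart f g ξ * exp (-(t / 16)) := by
  have hF : 0 ≤ ∫ y, |f y| := integral_nonneg fun _ => abs_nonneg _
  have hG : 0 ≤ ∫ y, |g y| := integral_nonneg fun _ => abs_nonneg _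
  have hnorm : ‖I * Complex.exp (↑(2 * π * inner ℝ ξ x) * I)‖ = 1 := by
    rw [norm_mul, Complex.norm_I, Complex.norm_exp_ofReal_mul_I, one_mul]
  by_cases hξ : ξ ∈ lowFreq n
  · rw [indicator_of_mem hξ]
    have h1 := hw.norm_fourier_sub_le hf hg ht hξ
    have h2 := abs_osc_combination_le hR hfs hgs hfc hgc hf hg hM hξ
    have h3 := re_I_mul_exp_mul_fourier hfs hfc x ξ
    have h4 := re_I_mul_exp_mul_fourier hgs hgc x ξ
    have h5 : exp (-(decayRate ξ * t)) ≤ exp (-(4 * π ^ 2 * ‖ξ‖ ^ 2 * t)) := by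
      have := le_half_sub_charRoot (k := 4 * π ^ 2 * ‖ξ‖ ^ 2) (by positivity) hξ
      gcongr
      exact this
    set E : ℂ := I * Complex.exp (↑(2 * π * inner ℝ ξ x) * I)
    set fh : ℂ := 𝓕 (fun x => (f x : ℂ)) ξ
    set gh : ℂ := 𝓕 (fun x => (g x : ℂ)) ξ
    set uh : ℂ := 𝓕 (fun x => (U (x, t) : ℂ)) ξ
    set b : ℝ := 1 / 2 + 1 / 2 * (1 / (2 * charRoot (4 * π ^ 2 * ‖ξ‖ ^ 2)))
    set a : ℝ := 1 / (2 * charRoot (4 * π ^ 2 * ‖ξ‖ ^ 2))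
    set d : ℝ := exp (-(decayRate ξ * t))
    have e1 : E * uh = E * (uh - (d : ℂ) * ((b : ℂ) * fh + (a : ℂ) * gh))
        + ((d * b : ℝ) : ℂ) * (E * fh) + ((d * a : ℝ) : ℂ) * (E * gh) := by
      push_cast; ring
    have e2 : (E * uh).re + d * (2 * π * M * inner ℝ w ξ)
        = (E * (uh - (d : ℂ) * ((b : ℂ) * fh + (a : ℂ) * gh))).re
          + -(d * (b * osc f x ξ + a * osc g x ξ - 2 * π * M * inner ℝ w ξ)) := by
      rw [e1, Complex.add_re, Complex.add_re, Complex.re_ofReal_mul, Complex.re_ofReal_mul, h3,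
        h4]
      ring
    rw [e2, add_comm]
    refine (abs_add_le _ _).trans (add_le_add ?_ ?_)
    · rw [abs_neg, abs_mul, abs_of_pos (exp_pos _)]
      refine (mul_le_mul h5 h2 (abs_nonneg _) (exp_pos _).le).trans (le_of_eq ?_)
      ring
    · refine (Complex.abs_re_le_norm _).trans ?_
      rw [norm_mul, hnorm, one_mul]
      exact h1
  · rw [indicator_of_notMem hξ, add_zero]
    refine (Complex.abs_re_le_norm _).trans ?_
    rw [norm_mul, hnorm, one_mul]
    refine (hw.norm_fourier_le_of_high hf hg ht hξ).trans (le_add_of_nonneg_left ?_)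
    positivity

end IsDampedWave
end

section
open scoped FourierTransform
open Complex (I)

theorem continuous_fourier_of_integrable {v : EuclideanSpace ℝ (Fin n) → ℂ}
    (hv : Integrable v) : Continuous (𝓕 v) :=
  VectorFourier.fourierIntegral_continuous Real.continuous_fourierChar
    continuous_inner hv

theorem sqrt_pow_mul_exp_neg_le (m : ℕ) {t : ℝ} (ht : 1 ≤ t) :
    √t ^ m * exp (-(t / 16)) ≤ m.factorial * 16 ^ m := by
  have h1 : √t ^ m ≤ t ^ m :=
    pow_le_pow_left₀ (Real.sqrt_nonneg t) ((Real.sqrt_le_left (by linarith)).2 (by nlinarith)) _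
  have h2 := Real.pow_div_factorial_le_exp (t / 16) (by positivity) m
  rw [div_pow, div_div, div_le_iff₀ (by positivity)] at h2
  calc √t ^ m * exp (-(t / 16))
      ≤ (exp (t / 16) * (16 ^ m * m.factorial)) * exp (-(t / 16)) := by
        gcongr
        exact h1.trans h2
    _ = exp (t / 16) * exp (-(t / 16)) * (m.factorial * 16 ^ m) := by ring
    _ = m.factorial * 16 ^ m := by rw [← Real.exp_add]; simp

theorem mul_mul_sq_le_of_integral_bounds {m : ℕ} {p s e w X B K N Q c L J : ℝ} (hs : 0 < s)
    (hp : 0 < p) (hw : 0 < w) (hX : 1 ≤ X) (hN : 0 ≤ N) (hQ : 0 ≤ Q)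
    (hlow : c * w ^ 2 ≤ s ^ (m + 2) * J) (hmain : p * J ≤ w * (B * X * L + N * e))
    (hL : s ^ (m + 4) * L = K) (he : s ^ (m + 4) * e ≤ Q) :
    p * c * w * s ^ 2 ≤ (B * K + Q * N + 1) * X := by
  refine le_of_mul_le_mul_left (a := w) ?_ hw
  calc w * (p * c * w * s ^ 2) = p * s ^ 2 * (c * w ^ 2) := by ring
    _ ≤ p * s ^ 2 * (s ^ (m + 2) * J) := by gcongr
    _ = s ^ (m + 4) * (p * J) := by ring
    _ ≤ s ^ (m + 4) * (w * (B * X * L + N * e)) := by gcongr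
    _ = w * (B * X * (s ^ (m + 4) * L) + N * (s ^ (m + 4) * e)) := by ring
    _ ≤ w * (B * X * K + N * Q) := by rw [hL]; gcongr
    _ ≤ w * ((B * K + Q * N + 1) * X) := by
      gcongr
      nlinarith [mul_le_mul_of_nonneg_left hX (mul_nonneg hN hQ)]

namespace IsDampedWave

variable {U : EuclideanSpace ℝ (Fin n) × ℝ → ℝ}
  {D : EuclideanSpace ℝ (Fin n) × ℝ → (EuclideanSpace ℝ (Fin n) × ℝ →L[ℝ] ℝ)}
  {H : EuclideanSpace ℝ (Fin n) × ℝ → (EuclideanSpace ℝ (Fin n) × ℝ →L[ℝ]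
    EuclideanSpace ℝ (Fin n) × ℝ →L[ℝ] ℝ)} {f g : EuclideanSpace ℝ (Fin n) → ℝ} {R : ℝ}

theorem continuous_fourier (hw : IsDampedWave U D H f g) (hf : ∀ x, R < ‖x‖ → f x = 0)
    (hg : ∀ x, R < ‖x‖ → g x = 0) {t : ℝ} (ht : 0 ≤ t) :
    Continuous (𝓕 (fun x => (U (x, t) : ℂ))) := by
  refine continuous_fourier_of_integrable ((Complex.continuous_ofReal.comp
    (hw.continuous_U ht)).integrable_of_hasCompactSupport (HasCompactSupport.intro
      (isCompact_closedBall (0 : EuclideanSpace ℝ (Fin n)) (R + 3 * t)) fun x hx => ?_))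
  rw [mem_closedBall_zero_iff, not_le] at hx
  simp [hw.U_eq_zero hf hg (p := (x, t)) ht hx]

theorem integrable_inner_mul_fourier (hw : IsDampedWave U D H f g)
    (hfs : ContDiff ℝ (⊤ : ℕ∞) f) (hgs : ContDiff ℝ (⊤ : ℕ∞) g) (hfc : HasCompactSupport f)
    (hgc : HasCompactSupport g) (hf : ∀ x, R < ‖x‖ → f x = 0)
    (hg : ∀ x, R < ‖x‖ → g x = 0) {t : ℝ} (ht : 0 < t) (w : EuclideanSpace ℝ (Fin n)) :
    Integrable fun ξ => ((inner ℝ w ξ : ℝ) : ℂ) * 𝓕 (fun x => (U (x, t) : ℂ)) ξ := by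
  have hc : Continuous fun ξ : EuclideanSpace ℝ (Fin n) =>
      ((inner ℝ w ξ : ℝ) : ℂ) * 𝓕 (fun x => (U (x, t) : ℂ)) ξ :=
    (Complex.continuous_ofReal.comp (by fun_prop)).mul (hw.continuous_fourier hf hg ht.le)
  rw [← integrableOn_univ, ← union_compl_self (lowFreq n)]
  refine (hc.continuousOn.integrableOn_compact isCompact_lowFreq).union ?_
  refine Integrable.mono' (((integrable_norm_mul_fastPart hfs hgs hfc hgc).const_mul
    (‖w‖ * exp (-(t / 16)))).integrableOn) hc.aestronglyMeasurable ?_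
  refine (ae_restrict_iff' isCompact_lowFreq.measurableSet.compl).2 (ae_of_all _ fun ξ hξ => ?_)
  rw [norm_mul, Complex.norm_real]
  calc ‖inner ℝ w ξ‖ * ‖𝓕 (fun x => (U (x, t) : ℂ)) ξ‖
      ≤ (‖w‖ * ‖ξ‖) * (fastPart f g ξ * exp (-(t / 16))) := by
        gcongr
        · exact norm_inner_le_norm w ξ
        · exact hw.norm_fourier_le_of_high hf hg ht hξ
    _ = _ := by ring

theorem integrable_inner_mul_re (hw : IsDampedWave U D H f g)
    (hfs : ContDiff ℝ (⊤ : ℕ∞) f) (hgs : ContDiff ℝ (⊤ : ℕ∞) g) (hfc : HasCompactSupport f)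
    (hgc : HasCompactSupport g) (hf : ∀ x, R < ‖x‖ → f x = 0)
    (hg : ∀ x, R < ‖x‖ → g x = 0) {t : ℝ} (ht : 0 < t) (w x : EuclideanSpace ℝ (Fin n)) :
    Integrable fun ξ => inner ℝ w ξ * (I * Complex.exp (↑(2 * π * inner ℝ ξ x) * I) *
      𝓕 (fun x => (U (x, t) : ℂ)) ξ).re := by
  refine (hw.integrable_inner_mul_fourier hfs hgs hfc hgc hf hg ht w).norm.mono' ?_
    (ae_of_all _ fun ξ => ?_)
  · have := hw.continuous_fourier hf hg ht.le
    exact Continuous.aestronglyMeasurable (by fun_prop)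
  · rw [norm_mul, norm_mul, Complex.norm_real]
    gcongr
    refine (Complex.abs_re_le_norm _).trans ?_
    rw [norm_mul, norm_mul, Complex.norm_I, Complex.norm_exp_ofReal_mul_I, one_mul, one_mul]

/-- Fourier representation of the spatial derivatives of the solution. -/
theorem spatial_deriv_eq_integral (hw : IsDampedWave U D H f g)
    (hfs : ContDiff ℝ (⊤ : ℕ∞) f) (hgs : ContDiff ℝ (⊤ : ℕ∞) g) (hfc : HasCompactSupport f)
    (hgc : HasCompactSupport g) (hf : ∀ x, R < ‖x‖ → f x = 0)
    (hg : ∀ x, R < ‖x‖ → g x = 0) {t : ℝ} (ht : 0 < t) (w x : EuclideanSpace ℝ (Fin n)) :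
    D (x, t) (w, 0) = 2 * π * ∫ ξ, inner ℝ w ξ *
      (I * Complex.exp (↑(2 * π * inner ℝ ξ x) * I) * 𝓕 (fun x => (U (x, t) : ℂ)) ξ).re := by
  have hfour : 𝓕 (fun x => (D (x, t) (w, 0) : ℂ)) = fun ξ =>
      (2 * π * I) * (((inner ℝ w ξ : ℝ) : ℂ) * 𝓕 (fun x => (U (x, t) : ℂ)) ξ) := by
    ext ξ
    rw [hw.fourier_space_deriv hf hg ht]
    ring
  have hcont : Continuous fun x => (D (x, t) (w, 0) : ℂ) :=
    Complex.continuous_ofReal.comp ((hw.continuous_D ht.le).clm_apply continuous_const)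
  have hint : Integrable fun x => (D (x, t) (w, 0) : ℂ) := by
    refine hcont.integrable_of_hasCompactSupport (HasCompactSupport.intro
      (isCompact_closedBall (0 : EuclideanSpace ℝ (Fin n)) (R + 3 * t)) fun x hx => ?_)
    rw [mem_closedBall_zero_iff, not_le] at hx
    simp [hw.D_eq_zero_of_pos hf hg (p := (x, t)) ht hx]
  have hi := hw.integrable_inner_mul_fourier hfs hgs hfc hgc hf hg ht w
  have hinv := congrFun (hcont.fourierInv_fourier_eq hint
    (by rw [hfour]; exact hi.const_mul _)) x
  rw [Real.fourierInv_eq', hfour] at hinv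
  simp only [smul_eq_mul] at hinv
  have e : ∀ ξ, Complex.exp (↑(2 * π * inner ℝ ξ x) * I) *
      (2 * π * I * (((inner ℝ w ξ : ℝ) : ℂ) * 𝓕 (fun x => (U (x, t) : ℂ)) ξ))
      = ((2 * π : ℝ) : ℂ) * (((inner ℝ w ξ : ℝ) : ℂ) * (I *
        Complex.exp (↑(2 * π * inner ℝ ξ x) * I) * 𝓕 (fun x => (U (x, t) : ℂ)) ξ)) := by
    intro ξ; push_cast; ring
  simp only [e] at hinv
  have hi' : Integrable fun ξ => ((inner ℝ w ξ : ℝ) : ℂ) * (I *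
        Complex.exp (↑(2 * π * inner ℝ ξ x) * I) * 𝓕 (fun x => (U (x, t) : ℂ)) ξ) := by
    have hcu := hw.continuous_fourier hf hg ht.le
    refine hi.norm.mono' (Continuous.aestronglyMeasurable (by fun_prop)) (ae_of_all _ fun ξ => ?_)
    rw [norm_mul, norm_mul, norm_mul, norm_mul, Complex.norm_I, Complex.norm_exp_ofReal_mul_I,
      one_mul, one_mul]
  rw [integral_const_mul] at hinv
  have hre := congrArg Complex.re hinv
  rw [Complex.re_ofReal_mul, Complex.ofReal_re] at hre
  have h2 := integral_re hi'
  simp only [RCLike.re_eq_complex_re, Complex.re_ofReal_mul] at h2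
  rw [← hre, h2]

/-- At a point where the derivative in the direction `w` of the offset from the centroid vanishes,
`w` is small. -/
theorem exists_norm_offset_le (hw : IsDampedWave U D H f g) (hn : 1 ≤ n) (hR : 0 ≤ R)
    (hfs : ContDiff ℝ (⊤ : ℕ∞) f) (hgs : ContDiff ℝ (⊤ : ℕ∞) g) (hfc : HasCompactSupport f)
    (hgc : HasCompactSupport g) (hf : ∀ x, R < ‖x‖ → f x = 0)
    (hg : ∀ x, R < ‖x‖ → g x = 0) {M : ℝ} (hMpos : 0 < M) :
    ∃ C > (0 : ℝ), ∀ x w : EuclideanSpace ℝ (Fin n), ∀ t ≥ (1 : ℝ),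
      ((∫ y, f y) • x - ∫ y, f y • y) + ((∫ y, g y) • x - ∫ y, g y • y) = M • w →
      D (x, t) (w, 0) = 0 → ‖w‖ ≤ C * (1 + ‖x‖) ^ 3 / t := by
  obtain ⟨c, hc, hlow⟩ := inner_sq_integral_lower hn
  set B : ℝ := ((∫ y, |f y|) + ∫ y, |g y|) *
    (24 * π ^ 2 * (2 * π * (1 + R)) + 2 * (2 * π * (1 + R)) ^ 3) with hB
  have hF : 0 ≤ ∫ y, |f y| := integral_nonneg fun _ => abs_nonneg _
  have hG : 0 ≤ ∫ y, |g y| := integral_nonneg fun _ => abs_nonneg _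
  have hB0 : 0 ≤ B := by positivity
  set K : ℝ := ∫ ξ : EuclideanSpace ℝ (Fin n), ‖ξ‖ ^ 4 * exp (-(4 * π ^ 2 * ‖ξ‖ ^ 2)) with hK
  have hK0 : 0 ≤ K := integral_nonneg fun _ => by positivity
  set N : ℝ := ∫ ξ : EuclideanSpace ℝ (Fin n), ‖ξ‖ * fastPart f g ξ with hN
  have hN0 : 0 ≤ N := integral_nonneg fun ξ => mul_nonneg (norm_nonneg _) (fastPart_nonneg f g ξ)
  set Q : ℝ := (n + 4).factorial * 16 ^ (n + 4) with hQ
  have hQ0 : 0 ≤ Q := by positivity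
  refine ⟨(B * K + Q * N + 1) / (2 * π * M * c), by positivity, fun x w t ht hM hD => ?_⟩
  have ht0 : 0 < t := by linarith
  have hs0 : 0 < √t := Real.sqrt_pos.2 ht0
  rcases eq_or_ne w 0 with hw0 | hw0
  · subst hw0
    rw [norm_zero]; positivity
  have hwpos : 0 < ‖w‖ := norm_pos_iff.2 hw0
  set P : EuclideanSpace ℝ (Fin n) → ℝ := fun ξ => (I *
    Complex.exp (↑(2 * π * inner ℝ ξ x) * I) * 𝓕 (fun x => (U (x, t) : ℂ)) ξ).re with hP
  have hPi : Integrable fun ξ => inner ℝ w ξ * P ξ :=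
    hw.integrable_inner_mul_re hfs hgs hfc hgc hf hg ht0 w x
  have hP0 : ∫ ξ, inner ℝ w ξ * P ξ = 0 := by
    have := hw.spatial_deriv_eq_integral hfs hgs hfc hgc hf hg ht0 w x
    rw [hD] at this
    exact (mul_eq_zero.1 this.symm).resolve_left (by positivity)
  have hLi : Integrable ((lowFreq n).indicator fun ξ : EuclideanSpace ℝ (Fin n) =>
      exp (-(decayRate ξ * t)) * inner ℝ w ξ ^ 2) := by
    rw [integrable_indicator_iff isCompact_lowFreq.measurableSet]
    have := continuous_decayRate (n := n)
    exact ContinuousOn.integrableOn_compact isCompact_lowFreq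
      (Continuous.continuousOn (by fun_prop))
  set J : ℝ := ∫ ξ in lowFreq n, exp (-(decayRate ξ * t)) * inner ℝ w ξ ^ 2 with hJ
  have hmain : 2 * π * M * J ≤ ‖w‖ * (B * (1 + ‖x‖) ^ 3 *
      (∫ ξ : EuclideanSpace ℝ (Fin n), ‖ξ‖ ^ 4 * exp (-(4 * π ^ 2 * ‖ξ‖ ^ 2 * t)))
      + N * exp (-(t / 16))) := by
    have e1 : 2 * π * M * J = ∫ ξ, (inner ℝ w ξ * P ξ + 2 * π * M *
        (lowFreq n).indicator (fun ξ => exp (-(decayRate ξ * t)) * inner ℝ w ξ ^ 2) ξ) := by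
      rw [integral_add hPi (hLi.const_mul _), hP0, zero_add, integral_const_mul,
        integral_indicator isCompact_lowFreq.measurableSet]
    have i1 := (integrable_norm_pow_four_mul_heat (n := n) ht0).const_mul (B * (1 + ‖x‖) ^ 3)
    have i2 := (integrable_norm_mul_fastPart hfs hgs hfc hgc).mul_const (exp (-(t / 16)))
    rw [e1, hN, ← integral_mul_const, ← integral_const_mul (B * (1 + ‖x‖) ^ 3),
      ← integral_add i1 i2, ← integral_const_mul]
    refine integral_mono (hPi.add (hLi.const_mul _)) ((i1.add i2).const_mul _) fun ξ => ?_
    have hb := hw.abs_re_fourier_add_le hR hfs.continuous hgs.continuous hfc hgc hf hg hM ht0 ξ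
    have hin := abs_real_inner_le_norm w ξ
    have e2 : inner ℝ w ξ * P ξ + 2 * π * M *
        (lowFreq n).indicator (fun ξ => exp (-(decayRate ξ * t)) * inner ℝ w ξ ^ 2) ξ
        = inner ℝ w ξ * (P ξ + (lowFreq n).indicator (fun ξ => exp (-(decayRate ξ * t)) *
          (2 * π * M * inner ℝ w ξ)) ξ) := by
      by_cases hξ : ξ ∈ lowFreq n
      · rw [indicator_of_mem hξ, indicator_of_mem hξ]; ring
      · rw [indicator_of_notMem hξ, indicator_of_notMem hξ]; ring
    simp only
    rw [e2]
    refine (le_abs_self _).trans ?_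
    rw [abs_mul]
    refine (mul_le_mul hin hb (abs_nonneg _) (by positivity)).trans (le_of_eq ?_)
    ring
  have hheat := integral_norm_pow_four_mul_heat (n := n) ht0
  rw [← hK] at hheat
  set L : ℝ := ∫ ξ : EuclideanSpace ℝ (Fin n), ‖ξ‖ ^ 4 * exp (-(4 * π ^ 2 * ‖ξ‖ ^ 2 * t))
  have hX : 1 ≤ (1 + ‖x‖) ^ 3 := one_le_pow₀ (by linarith [norm_nonneg x])
  have hfin := mul_mul_sq_le_of_integral_bounds hs0 (by positivity) hwpos hX hN0 hQ0
    (hlow w t ht) hmain hheat (sqrt_pow_mul_exp_neg_le (n + 4) ht)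
  rw [Real.sq_sqrt ht0.le] at hfin
  rw [div_mul_eq_mul_div, div_div, le_div_iff₀ (by positivity)]
  linarith

end IsDampedWave
end

theorem CS_subset_closedBall {v : EuclideanSpace ℝ (Fin n) → ℝ} {R : ℝ}
    (hv : ∀ x, R < ‖x‖ → v x = 0) : CS v ⊆ closedBall 0 R := by
  refine convexHull_min (closure_minimal (fun x hx => ?_) isClosed_closedBall)
    (convex_closedBall 0 R)
  rw [mem_closedBall_zero_iff]
  by_contra! h
  exact hx (hv x h)

theorem exists_radius {v : EuclideanSpace ℝ (Fin n) → ℝ} (hv : HasCompactSupport v) :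
    ∃ R, ∀ x, R < ‖x‖ → v x = 0 := by
  obtain ⟨R, hR⟩ := hv.isCompact.isBounded.subset_closedBall 0
  refine ⟨R, fun x hx => image_eq_zero_of_notMem_tsupport fun h => ?_⟩
  exact absurd (mem_closedBall_zero_iff.1 (hR h)) (not_le.2 hx)

theorem sobNorm_nonneg (l : ℕ) (v : EuclideanSpace ℝ (Fin n) → ℝ) : 0 ≤ sobNorm l v :=
  Finset.sum_nonneg fun _ _ => Real.iSup_nonneg fun _ => norm_nonneg _

theorem L1norm_nonneg (v : EuclideanSpace ℝ (Fin n) → ℝ) : 0 ≤ L1norm v :=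
  integral_nonneg fun _ => abs_nonneg _

theorem offset_centroid_add {f g : EuclideanSpace ℝ (Fin n) → ℝ} (hf : Continuous f)
    (hg : Continuous g) (hfc : HasCompactSupport f) (hgc : HasCompactSupport g)
    (hM : ∫ y, (f + g) y ≠ 0) (x : EuclideanSpace ℝ (Fin n)) :
    ((∫ y, f y) • x - ∫ y, f y • y) + ((∫ y, g y) • x - ∫ y, g y • y)
      = (∫ y, (f + g) y) • (x - centroid (f + g)) := by
  have h1 : ∫ y, (f + g) y = (∫ y, f y) + ∫ y, g y :=
    integral_add (hf.integrable_of_hasCompactSupport hfc) (hg.integrable_of_hasCompactSupport hgc)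
  have h2 : ∫ y, (f + g) y • y = (∫ y, f y • y) + ∫ y, g y • y := by
    have hfi : Integrable fun y => f y • y :=
      (hf.smul continuous_id).integrable_of_hasCompactSupport hfc.smul_right
    have hgi : Integrable fun y => g y • y :=
      (hg.smul continuous_id).integrable_of_hasCompactSupport hgc.smul_right
    rw [← integral_add hfi hgi]
    simp only [Pi.add_apply, add_smul]
  rw [smul_sub, centroid, smul_inv_smul₀ hM, h2, h1, add_smul]
  abel

theorem tendsto_sq_div_of_isLittleO_sqrt {psi : ℝ → ℝ}
    (h : Tendsto (fun t => psi t / √t) atTop (𝓝 0)) (a b : ℝ) :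
    Tendsto (fun t => a * (b + psi t) ^ 2 / t) atTop (𝓝 0) := by
  have h1 : Tendsto (fun t : ℝ => b / √t) atTop (𝓝 0) :=
    tendsto_const_nhds.div_atTop Real.tendsto_sqrt_atTop
  have h2 : Tendsto (fun t => a * (b / √t + psi t / √t) ^ 2) atTop (𝓝 0) := by
    simpa using ((h1.add h).pow 2).const_mul a
  refine h2.congr' ?_
  filter_upwards [eventually_gt_atTop 0] with t ht
  rw [← add_div, div_pow, Real.sq_sqrt ht.le, mul_div_assoc]

/-- cf. Lemma `hp1`. For `ψ` non-decreasing with `ψ(0)=0`, `ψ(t)=o(√t)`,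
there are `C > 0`, an integer `ℓ` (depending only on `n`) and `T ≥ T₀(ψ)` such that for all
`t ≥ T` and every critical point `x ∈ 𝒞(u(·,t)) ∩ (CS(h) + ψ(t)Bⁿ)` (`h = f + g`),
`|x − m_h| ≤ C((1+ψ(t)²)/t + ((1+ψ(t))/t)(‖f‖₁/‖h‖₁) + e^{-t/2} t^{3n/2}(‖f‖_{W^{ℓ,∞}} + ‖g‖_{W^{ℓ,∞}})/‖h‖₁)`. -/
theorem critical_points_near_centroid (n : ℕ) (hn : 1 ≤ n)
    (f g : EuclideanSpace ℝ (Fin n) → ℝ)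
    (hf : ContDiff ℝ (⊤ : ℕ∞) f) (hg : ContDiff ℝ (⊤ : ℕ∞) g)
    (hfc : HasCompactSupport f) (hgc : HasCompactSupport g)
    (hne : f + g ≠ 0) (hpos : ∀ x, 0 ≤ f x + g x)
    (u : EuclideanSpace ℝ (Fin n) → ℝ → ℝ)
    (hreg : ContDiffOn ℝ 2 (fun p : EuclideanSpace ℝ (Fin n) × ℝ => u p.1 p.2) (univ ×ˢ Ici 0))
    (hpde : ∀ x, ∀ t > (0 : ℝ),
      deriv (deriv (fun s => u x s)) t - lap (fun z => u z t) x
        + deriv (fun s => u x s) t = 0)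
    (hu0 : ∀ x, u x 0 = f x)
    (hu1 : ∀ x, derivWithin (fun s => u x s) (Ici 0) 0 = g x)
    (ψ : ℝ → ℝ) (hψ0 : ψ 0 = 0) (hψmono : MonotoneOn ψ (Ici 0))
    (hψnn : ∀ t ≥ (0 : ℝ), 0 ≤ ψ t)
    (hψo : Tendsto (fun t => ψ t / Real.sqrt t) atTop (𝓝 0)) :
    ∃ C > (0 : ℝ), ∃ ℓ : ℕ, ∃ T, T0 f g ψ ≤ T ∧ ∀ t ≥ T,
      ∀ x ∈ critSet (fun z => u z t) ∩
        (CS (f + g) + ψ t • closedBall (0 : EuclideanSpace ℝ (Fin n)) 1),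
        ‖x - centroid (f + g)‖ ≤
          C * ((1 + ψ t ^ 2) / t
            + ((1 + ψ t) / t) * (L1norm f / L1norm (f + g))
            + exp (-t / 2) * t ^ ((3 * (n : ℝ)) / 2) *
              ((sobNorm ℓ f + sobNorm ℓ g) / L1norm (f + g))) := by

  obtain ⟨D, H, hw⟩ := isDampedWave_of_classical hreg hpde hu0 hu1
  obtain ⟨R₁, hR₁⟩ := exists_radius hfc
  obtain ⟨R₂, hR₂⟩ := exists_radius hgc
  set R : ℝ := max 0 (max R₁ R₂) with hRdef
  have hR : 0 ≤ R := le_max_left _ _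
  have hf0 : ∀ x, R < ‖x‖ → f x = 0 := fun x hx =>
    hR₁ x (((le_max_left _ _).trans (le_max_right _ _)).trans_lt hx)
  have hg0 : ∀ x, R < ‖x‖ → g x = 0 := fun x hx =>
    hR₂ x (((le_max_right _ _).trans (le_max_right _ _)).trans_lt hx)
  have hM : 0 < ∫ y, (f + g) y :=
    (hf.continuous.add hg.continuous).integral_pos_of_hasCompactSupport_nonneg_nonzero
      (hfc.add hgc) hpos (Function.ne_iff.1 hne).choose_spec
  obtain ⟨C, hC, hbound⟩ := hw.exists_norm_offset_le hn hR hf hg hfc hgc hf0 hg0 hM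
  set m := centroid (f + g) with hm
  obtain ⟨T₁, hT₁⟩ := eventually_atTop.1
    ((tendsto_sq_div_of_isLittleO_sqrt hψo C (1 + R)).eventually_le_const
      (show (0 : ℝ) < 1 / 2 by norm_num))
  refine ⟨4 * C * (1 + ‖m‖) * (1 + R) ^ 2, by positivity, 0, max (T0 f g ψ) (max 1 T₁),
    le_max_left _ _, fun t ht x hx => ?_⟩
  have ht1 : 1 ≤ t := ((le_max_left _ _).trans (le_max_right _ _)).trans ht
  have ht0 : 0 < t := by linarith
  have hsmall := hT₁ t (((le_max_right _ _).trans (le_max_right _ _)).trans ht)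
  have hψt : 0 ≤ ψ t := hψnn t ht0.le
  obtain ⟨⟨-, hgrad⟩, hxmem⟩ := hx
  have hxnorm : ‖x‖ ≤ R + ψ t := by
    obtain ⟨y, hy, z, ⟨b, hb, rfl⟩, rfl⟩ := hxmem
    have hy' := CS_subset_closedBall (v := f + g) (R := R)
      (fun x hx => by simp [hf0 x hx, hg0 x hx]) hy
    rw [mem_closedBall_zero_iff] at hy' hb
    refine (norm_add_le _ _).trans (add_le_add hy' ?_)
    simp only [norm_smul, Real.norm_of_nonneg hψt]
    exact mul_le_of_le_one_right hψt hb
  have hD : D (x, t) (x - m, 0) = 0 := by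
    have h1 : HasFDerivAt (fun z => u z t)
        ((D (x, t)).comp (ContinuousLinearMap.inl ℝ (EuclideanSpace ℝ (Fin n)) ℝ)) x :=
      HasFDerivAt.comp (g := fun p : EuclideanSpace ℝ (Fin n) × ℝ => u p.1 p.2)
        (f := fun z => (z, t)) x (hw.derivU (x, t) ht0) (hasFDerivAt_prodMk_left x t)
    have h2 := h1.hasGradientAt.gradient
    rw [hgrad] at h2
    have h3 := (LinearIsometryEquiv.map_eq_zero_iff _).1 h2.symm
    simpa using congrArg (fun L => L (x - m)) h3
  have hle := hbound x (x - m) t ht1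
    (offset_centroid_add hf.continuous hg.continuous hfc hgc hM.ne' x) hD
  have hxw : 1 + ‖x‖ ≤ 1 + ‖m‖ + ‖x - m‖ := by
    linarith [norm_le_norm_add_norm_sub' x m]
  have hmain : ‖x - m‖ ≤ 2 * (C * (1 + R + ψ t) ^ 2 / t) * (1 + ‖m‖) := by
    have h1 : C * (1 + ‖x‖) ^ 3 / t
        ≤ C * (1 + R + ψ t) ^ 2 / t * (1 + ‖m‖ + ‖x - m‖) := by
      rw [div_mul_eq_mul_div, pow_succ, ← mul_assoc]
      have h0 : 1 + ‖x‖ ≤ 1 + R + ψ t := by linarith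
      gcongr
    have h2 := mul_le_mul_of_nonneg_right hsmall (norm_nonneg (x - m))
    linarith
  have hsq : (1 + R + ψ t) ^ 2 ≤ 2 * (1 + R) ^ 2 * (1 + ψ t ^ 2) := by
    have h1 : 1 + R + ψ t ≤ (1 + R) * (1 + ψ t) := by nlinarith [mul_nonneg hR hψt]
    have h2 : (1 + ψ t) ^ 2 ≤ 2 * (1 + ψ t ^ 2) := by nlinarith [sq_nonneg (1 - ψ t)]
    calc (1 + R + ψ t) ^ 2 ≤ ((1 + R) * (1 + ψ t)) ^ 2 := by gcongr
      _ = (1 + R) ^ 2 * (1 + ψ t) ^ 2 := mul_pow _ _ _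
      _ ≤ (1 + R) ^ 2 * (2 * (1 + ψ t ^ 2)) := by gcongr
      _ = _ := by ring
  have hL1 := L1norm_nonneg (f + g)
  have hsob : 0 ≤ sobNorm 0 f + sobNorm 0 g := add_nonneg (sobNorm_nonneg 0 f) (sobNorm_nonneg 0 g)
  have hLf := L1norm_nonneg f
  calc ‖x - m‖ ≤ 2 * (C * (1 + R + ψ t) ^ 2 / t) * (1 + ‖m‖) := hmain
    _ ≤ 2 * (C * (2 * (1 + R) ^ 2 * (1 + ψ t ^ 2)) / t) * (1 + ‖m‖) := by gcongr
    _ = 4 * C * (1 + ‖m‖) * (1 + R) ^ 2 * ((1 + ψ t ^ 2) / t) := by ring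
    _ ≤ _ := by
      refine mul_le_mul_of_nonneg_left ?_ (by positivity)
      rw [add_assoc]
      exact le_add_of_nonneg_right (by positivity)
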